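/- Let θ > 0 and let α, β be real numbers with 0 ≤ α < 1 and α < β < α + 1. Let c₂ := lim_{N→∞} (1/N) ∑_{j=1}^N ({jβ} − {jα})² (this limit exists). Then c₂ > 0, and if μ_N denotes the Ewens measure of parameter θ on S_N, E_N := ∑_{σ} μ_N(σ) X_N^I(σ), and Y_N(σ) := (X_N^I(σ) − E_N)/√(θ c₂ log N), then the laws of Y_N under μ_N converge weakly (i.e. in distribution) as N → ∞ to the standard Gaussian distribution N(0,1) on ℝ. -/

import Mathlib

open Filter Finset MeasureTheory

/-- The number of `j`-cycles of a permutation of `{1,…,N}`, where fixed points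
are counted as `1`-cycles. -/
def cycleCount (N : ℕ) (σ : Equiv.Perm (Fin N)) (j : ℕ) : ℕ :=
  if j = 1 then N - σ.support.card else σ.cycleType.count j

/-- The total number of cycles of `σ`, fixed points counted as `1`-cycles. -/
def totalCycles (N : ℕ) (σ : Equiv.Perm (Fin N)) : ℕ :=
  Multiset.card σ.cycleType + (N - σ.support.card)

/-- The Ewens probability of parameter `θ` of the permutation `σ`:
`θ^{K(σ)} / (θ(θ+1)⋯(θ+N−1))`. -/
noncomputable def ewens (θ : ℝ) (N : ℕ) (σ : Equiv.Perm (Fin N)) : ℝ :=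
  θ ^ totalCycles N σ / ∏ i ∈ Finset.range N, (θ + (i : ℝ))

/-- The number of eigenvalues of the permutation matrix of `σ` in the arc
`(e^{2iπα}, e^{2iπβ}]`: `X_N^I(σ) = ∑_{j=1}^N a_{N,j}(σ)(⌊jβ⌋ − ⌊jα⌋)`. -/
noncomputable def XNI (N : ℕ) (α β : ℝ) (σ : Equiv.Perm (Fin N)) : ℝ :=
  ∑ j ∈ Finset.Icc 1 N,
    (cycleCount N σ j : ℝ) * ((⌊(j : ℝ) * β⌋ : ℝ) - (⌊(j : ℝ) * α⌋ : ℝ))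

/-- The Ewens expectation of `X_N^I`. -/
noncomputable def ewensMean (θ : ℝ) (N : ℕ) (α β : ℝ) : ℝ :=
  ∑ σ : Equiv.Perm (Fin N), ewens θ N σ * XNI N α β σ



/-- product of the factorials of multiplicities -/
def mfac (s : Multiset ℕ) : ℕ := ∏ n ∈ s.toFinset, (s.count n).factorial

lemma mfac_eq (s : Multiset ℕ) (T : Finset ℕ) (h : s.toFinset ⊆ T) :
    mfac s = ∏ n ∈ T, (s.count n).factorial := by
  unfold mfac
  refine Finset.prod_subset h ?_
  intro x _ hx
  have : s.count x = 0 := by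
    rw [Multiset.count_eq_zero]; simpa using hx
  simp [this]

lemma mfac_cons (j : ℕ) (s : Multiset ℕ) : mfac (j ::ₘ s) = (s.count j + 1) * mfac s := by
  rw [mfac_eq (j ::ₘ s) (insert j s.toFinset) (by simp),
    mfac_eq s (insert j s.toFinset) (by simp)]
  rw [← Finset.mul_prod_erase _ _ (Finset.mem_insert_self j _),
    ← Finset.mul_prod_erase (insert j s.toFinset) (fun n => (s.count n).factorial)
      (Finset.mem_insert_self j _), ← mul_assoc]
  congr 1
  · rw [Multiset.count_cons_self, Nat.factorial_succ]
  · refine Finset.prod_congr rfl ?_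
    intro x hx
    rw [Multiset.count_cons_of_ne (Finset.ne_of_mem_erase hx)]

lemma mfac_pos (s : Multiset ℕ) : 0 < mfac s :=
  Finset.prod_pos fun _ _ => Nat.factorial_pos _

/-- Weight of a multiset of cycle lengths. -/
noncomputable def wt (θ : ℝ) (s : Multiset ℕ) : ℝ :=
  θ ^ (Multiset.card s) / ((s.prod : ℝ) * (mfac s : ℝ))

lemma wt_cons (θ : ℝ) (j : ℕ) (hj : 0 < j) (s : Multiset ℕ) :
    ((j : ℝ) * ((j ::ₘ s).count j : ℝ)) * wt θ (j ::ₘ s) = θ * wt θ s := by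
  unfold wt
  rw [mfac_cons, Multiset.card_cons, Multiset.prod_cons, Multiset.count_cons_self]
  have h1 : (mfac s : ℝ) ≠ 0 := by exact_mod_cast (mfac_pos s).ne'
  have h2 : (j : ℝ) ≠ 0 := by exact_mod_cast hj.ne'
  have h3 : ((s.count j : ℝ) + 1) ≠ 0 := by positivity
  push_cast
  by_cases h4 : (s.prod : ℝ) = 0
  · have : (Multiset.map (Nat.cast : ℕ → ℝ) s).prod = 0 := by
      rw [← Nat.cast_multiset_prod]; exact h4
    simp [this]
  · have : (Multiset.map (Nat.cast : ℕ → ℝ) s).prod ≠ 0 := by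
      rw [← Nat.cast_multiset_prod]; exact h4
    field_simp
    ring

/-- Weighted sum over partitions. -/
noncomputable def SP {E : Type*} [AddCommGroup E] [Module ℝ E] (θ : ℝ) (n : ℕ)
    (F : Multiset ℕ → E) : E :=
  ∑ p : n.Partition, wt θ p.parts • F p.parts

section
variable {E : Type*} [AddCommGroup E] [Module ℝ E]

lemma SP_cons (θ : ℝ) (n j : ℕ) (hj : 0 < j) (hjn : j ≤ n) (F : Multiset ℕ → E) :
    SP θ n (fun s => ((j : ℝ) * (s.count j : ℝ)) • F s) =
      θ • SP θ (n - j) (fun s => F (j ::ₘ s)) := by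
  classical
  unfold SP
  rw [Finset.smul_sum]
  have h1 : ∑ p : n.Partition, wt θ p.parts • ((j : ℝ) * (p.parts.count j : ℝ)) • F p.parts
      = ∑ p : n.Partition with j ∈ p.parts,
        wt θ p.parts • ((j : ℝ) * (p.parts.count j : ℝ)) • F p.parts := by
    symm
    apply Finset.sum_filter_of_ne
    intro p _ hp
    by_contra h
    rw [Multiset.count_eq_zero_of_notMem h] at hp
    simp at hp
  rw [h1]
  symm
  refine Finset.sum_bij (fun (q : (n - j).Partition) _ =>
    (⟨j ::ₘ q.parts, ?_, ?_⟩ : n.Partition)) ?_ ?_ ?_ ?_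
  · intro i hi
    rcases Multiset.mem_cons.1 hi with rfl | hi
    · exact hj
    · exact q.parts_pos hi
  · rw [Multiset.sum_cons, q.parts_sum]; omega
  · intro q _; simp
  · intro a _ b _ hab
    simp only [Nat.Partition.mk.injEq, Multiset.cons_inj_right] at hab
    exact Nat.Partition.ext hab
  · intro p hp
    have hp' : j ∈ p.parts := by simpa using hp
    refine ⟨⟨p.parts.erase j, fun hi => p.parts_pos (Multiset.mem_of_mem_erase hi), ?_⟩,
      Finset.mem_univ _, ?_⟩
    · have := Multiset.sum_erase hp'
      rw [p.parts_sum] at this; omega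
    · apply Nat.Partition.ext
      simp [Multiset.cons_erase hp']
  · intro q _
    simp only
    rw [smul_smul, smul_smul, mul_comm (wt θ (j ::ₘ q.parts)), wt_cons θ j hj]

lemma SP_gt (θ : ℝ) (n j : ℕ) (hjn : n < j) (F : Multiset ℕ → E) :
    SP θ n (fun s => ((j : ℝ) * (s.count j : ℝ)) • F s) = 0 := by
  unfold SP
  refine Finset.sum_eq_zero fun p _ => ?_
  have : p.parts.count j = 0 := by
    rw [Multiset.count_eq_zero]
    intro h
    have := Nat.Partition.le_of_mem_parts h
    omega
  simp [this]

lemma SP_add (θ : ℝ) (n : ℕ) (F G : Multiset ℕ → E) :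
    SP θ n (fun s => F s + G s) = SP θ n F + SP θ n G := by
  unfold SP; simp [Finset.sum_add_distrib]

lemma SP_sum {ι : Type*} (θ : ℝ) (n : ℕ) (T : Finset ι) (F : ι → Multiset ℕ → E) :
    SP θ n (fun s => ∑ i ∈ T, F i s) = ∑ i ∈ T, SP θ n (F i) := by
  unfold SP
  rw [Finset.sum_comm]
  simp [Finset.smul_sum]

lemma SP_smul (θ : ℝ) (n : ℕ) (c : ℝ) (F : Multiset ℕ → E) :
    SP θ n (fun s => c • F s) = c • SP θ n F := by
  unfold SP
  rw [Finset.smul_sum]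
  exact Finset.sum_congr rfl fun p _ => smul_comm _ _ _

lemma parts_sum_count {n : ℕ} (p : n.Partition) :
    ∑ j ∈ Finset.Icc 1 n, j * p.parts.count j = n := by
  conv_rhs => rw [← p.parts_sum, ← Multiset.map_id p.parts, Finset.sum_multiset_map_count]
  symm
  simp only [id, smul_eq_mul]
  rw [Finset.sum_congr rfl fun x _ => mul_comm _ x]
  refine Finset.sum_subset ?_ ?_
  · intro x hx
    have hx : x ∈ p.parts := by simpa using hx
    exact Finset.mem_Icc.2 ⟨p.parts_pos hx, Nat.Partition.le_of_mem_parts hx⟩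
  · intro x _ hx
    have : p.parts.count x = 0 := by
      rw [Multiset.count_eq_zero]; simpa using hx
    simp [this]

/-- `n ∑ = ∑_j θ ...` -/
lemma SP_rec (θ : ℝ) (n : ℕ) (F : Multiset ℕ → E) :
    (n : ℝ) • SP θ n F = ∑ j ∈ Finset.Icc 1 n, θ • SP θ (n - j) (fun s => F (j ::ₘ s)) := by
  rw [← SP_smul]
  have h1 : SP θ n (fun s => (n : ℝ) • F s) =
      SP θ n (fun s => ∑ j ∈ Finset.Icc 1 n, ((j : ℝ) * (s.count j : ℝ)) • F s) := by
    unfold SP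
    refine Finset.sum_congr rfl fun p _ => ?_
    congr 1
    simp only
    rw [← Finset.sum_smul]
    congr 1
    exact_mod_cast (parts_sum_count p).symm
  rw [h1, SP_sum]
  refine Finset.sum_congr rfl fun j hj => ?_
  obtain ⟨h1, h2⟩ := Finset.mem_Icc.1 hj
  exact SP_cons θ n j h1 h2 F

lemma SP_zero (θ : ℝ) (F : Multiset ℕ → E) : SP θ 0 F = F 0 := by
  unfold SP
  rw [Fintype.sum_unique]
  have : (default : Nat.Partition 0).parts = 0 := by
    have := (default : Nat.Partition 0).parts_sum
    rw [Multiset.eq_zero_iff_forall_notMem]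
    intro a ha
    have h1 := (default : Nat.Partition 0).parts_pos ha
    have h2 := Nat.Partition.le_of_mem_parts ha
    omega
  rw [this]
  simp [wt, mfac]

end

/-- `H θ n = (θ)_n / n!`. -/
noncomputable def HH (θ : ℝ) (n : ℕ) : ℝ := ∏ i ∈ Finset.range n, (θ + (i : ℝ)) / ((i : ℝ) + 1)

lemma HH_zero (θ : ℝ) : HH θ 0 = 1 := by simp [HH]
lemma HH_succ (θ : ℝ) (n : ℕ) : ((n : ℝ) + 1) * HH θ (n + 1) = (θ + n) * HH θ n := by
  unfold HH
  rw [Finset.prod_range_succ]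
  have : ((n : ℝ) + 1) ≠ 0 := by positivity
  field_simp

lemma HH_pos (θ : ℝ) (hθ : 0 < θ) (n : ℕ) : 0 < HH θ n :=
  Finset.prod_pos fun i _ => by positivity

lemma HH_sum (θ : ℝ) (n : ℕ) : (n : ℝ) * HH θ n = θ * ∑ k ∈ Finset.range n, HH θ k := by
  induction n with
  | zero => simp
  | succ n ih =>
    push_cast
    rw [HH_succ, Finset.sum_range_succ, mul_add, ← ih]; ring

lemma sum_Icc_reflect_one {E : Type*} [AddCommMonoid E] (n : ℕ) (f : ℕ → E) :
    ∑ j ∈ Finset.Icc 1 n, f (n - j) = ∑ k ∈ Finset.range n, f k := by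
  refine Finset.sum_bij' (fun j _ => n - j) (fun k _ => n - k) ?_ ?_ ?_ ?_ ?_
  · intro a ha; simp at ha ⊢; omega
  · intro a ha; simp at ha ⊢; omega
  · intro a ha; simp at ha ⊢; omega
  · intro a ha; simp at ha ⊢; omega
  · intro a ha; rfl

lemma SP_one (θ : ℝ) (n : ℕ) : SP θ n (fun _ => (1 : ℝ)) = HH θ n := by
  induction n using Nat.strong_induction_on with
  | _ n ih =>
    rcases Nat.eq_zero_or_pos n with rfl | hn
    · rw [SP_zero, HH_zero]
    · have h := SP_rec θ n (fun _ => (1 : ℝ))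
      have h2 := HH_sum θ n
      rw [← sum_Icc_reflect_one, Finset.mul_sum] at h2
      have hn' : (n : ℝ) ≠ 0 := by exact_mod_cast hn.ne'
      apply mul_left_cancel₀ hn'
      rw [h2]
      simp only [smul_eq_mul] at h
      rw [h]
      refine Finset.sum_congr rfl fun j hj => ?_
      rw [ih]
      simp at hj; omega

/-- cycle lengths including fixed points -/
def pp (N : ℕ) (σ : Equiv.Perm (Fin N)) : Multiset ℕ :=
  σ.cycleType + Multiset.replicate (N - σ.support.card) 1

lemma pp_count (N : ℕ) (σ : Equiv.Perm (Fin N)) (j : ℕ) :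
    (pp N σ).count j = cycleCount N σ j := by
  unfold pp cycleCount
  rw [Multiset.count_add, Multiset.count_replicate]
  split_ifs with h1 h2 h2
  · subst h1
    have : σ.cycleType.count 1 = 0 := by
      rw [Multiset.count_eq_zero]
      intro h
      have := Equiv.Perm.two_le_of_mem_cycleType h
      omega
    omega
  · omega
  · omega
  · omega

lemma pp_card (N : ℕ) (σ : Equiv.Perm (Fin N)) :
    Multiset.card (pp N σ) = totalCycles N σ := by
  simp [pp, totalCycles]

lemma pp_sum (N : ℕ) (σ : Equiv.Perm (Fin N)) : (pp N σ).sum = N := by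
  have := σ.support.card_le_univ
  simp only [Fintype.card_fin] at this
  simp [pp, Equiv.Perm.sum_cycleType]
  omega

lemma pp_pos (N : ℕ) (σ : Equiv.Perm (Fin N)) (i : ℕ) (hi : i ∈ pp N σ) : 0 < i := by
  rcases Multiset.mem_add.1 hi with h | h
  · have := Equiv.Perm.two_le_of_mem_cycleType h; omega
  · have := Multiset.eq_of_mem_replicate h; omega

lemma card_pp (N : ℕ) (p : N.Partition) :
    ((Finset.univ.filter (fun σ : Equiv.Perm (Fin N) => pp N σ = p.parts)).card)
      * (p.parts.prod * mfac p.parts) = N.factorial := by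
  classical
  set m := p.parts.filter (2 ≤ ·) with hm
  have hdec : p.parts = m + Multiset.replicate (p.parts.count 1) 1 := by
    conv_lhs => rw [← Multiset.filter_add_not (2 ≤ ·) p.parts]
    congr 1
    rw [← Multiset.filter_eq' ]
    refine Multiset.filter_congr ?_
    intro x hx
    have := p.parts_pos hx
    omega
  have hsum : m.sum + p.parts.count 1 = N := by
    have := congrArg Multiset.sum hdec
    rw [p.parts_sum] at this
    simp at this
    omega
  have h2 : ∀ a ∈ m, 2 ≤ a := fun a ha => (Multiset.mem_filter.1 ha).2
  have hset : (Finset.univ.filter (fun σ : Equiv.Perm (Fin N) => pp N σ = p.parts)) =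
      Finset.univ.filter (fun σ : Equiv.Perm (Fin N) => σ.cycleType = m) := by
    ext σ
    simp only [Finset.mem_filter, Finset.mem_univ, true_and]
    constructor
    · intro h
      rw [hm, ← h]
      have := Equiv.Perm.filter_parts_partition_eq_cycleType (σ := σ)
      rw [Equiv.Perm.parts_partition, Fintype.card_fin] at this
      exact this.symm
    · intro h
      rw [hdec, pp, h]
      congr 2
      rw [← Equiv.Perm.sum_cycleType, h]
      omega
  have key := Equiv.Perm.card_of_cycleType_mul_eq (Fin N) m
  rw [if_pos ⟨by rw [Fintype.card_fin]; omega, h2⟩, Fintype.card_fin] at key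
  rw [hset, ← key]
  congr 1
  have h3 : p.parts.prod = m.prod := by
    conv_lhs => rw [hdec]
    simp
  have hm1 : m.count 1 = 0 := by
    rw [Multiset.count_eq_zero]; intro h; have := h2 1 h; omega
  have h4 : mfac p.parts = (N - m.sum).factorial * mfac m := by
    have e : N - m.sum = p.parts.count 1 := by omega
    rw [e, mfac_eq p.parts (insert 1 m.toFinset), Finset.prod_insert, mfac]
    · congr 1
      refine Finset.prod_congr rfl fun x hx => ?_
      have hx : 2 ≤ x := h2 x (by simpa using hx)
      conv_lhs => rw [hdec]
      rw [Multiset.count_add, Multiset.count_replicate, if_neg (by omega), add_zero]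
    · intro h
      have := h2 1 (by simpa using h); omega
    · intro x hx
      rw [Multiset.mem_toFinset, hdec, Multiset.mem_add] at hx
      rcases hx with h | h
      · exact Finset.mem_insert_of_mem (by simpa using h)
      · rw [Multiset.eq_of_mem_replicate h]; exact Finset.mem_insert_self _ _
  rw [h3, h4]
  unfold mfac
  ring

lemma ewens_sum {E : Type*} [AddCommGroup E] [Module ℝ E] (θ : ℝ) (N : ℕ)
    (F : Multiset ℕ → E) :
    ∑ σ : Equiv.Perm (Fin N), ewens θ N σ • F (pp N σ) = (HH θ N)⁻¹ • SP θ N F := by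
  classical
  let g : Equiv.Perm (Fin N) → N.Partition := fun σ =>
    ⟨pp N σ, fun {i} hi => pp_pos N σ i hi, pp_sum N σ⟩
  rw [← Finset.sum_fiberwise (s := Finset.univ) (g := g), SP, Finset.smul_sum]
  refine Finset.sum_congr rfl fun p _ => ?_
  have h1 : ∀ σ ∈ Finset.univ.filter (fun σ => g σ = p), ewens θ N σ • F (pp N σ) =
      (θ ^ Multiset.card p.parts / ∏ i ∈ Finset.range N, (θ + (i : ℝ))) • F p.parts := by
    intro σ hσ
    have : pp N σ = p.parts := by
      have := (Finset.mem_filter.1 hσ).2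
      rw [← this]
    rw [ewens, ← pp_card, this]
  rw [Finset.sum_congr rfl h1, Finset.sum_const, ← Nat.cast_smul_eq_nsmul ℝ, smul_smul, smul_smul]
  congr 1
  have hc : (Finset.univ.filter (fun σ => g σ = p)) =
      Finset.univ.filter (fun σ : Equiv.Perm (Fin N) => pp N σ = p.parts) := by
    ext σ
    simp only [Finset.mem_filter, Finset.mem_univ, true_and]
    exact Nat.Partition.ext_iff
  have h2 := card_pp N p
  rw [← hc] at h2
  have h2' : (((Finset.univ.filter (fun σ => g σ = p)).card : ℝ)) *
    ((p.parts.prod : ℝ) * (mfac p.parts : ℝ)) = (N.factorial : ℝ) := by exact_mod_cast h2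
  have h3 : HH θ N = (∏ i ∈ Finset.range N, (θ + (i : ℝ))) / (N.factorial : ℝ) := by
    rw [HH, Finset.prod_div_distrib]
    congr 1
    rw [← Finset.prod_range_add_one_eq_factorial]
    push_cast; rfl
  have h4 : (mfac p.parts : ℝ) ≠ 0 := by exact_mod_cast (mfac_pos _).ne'
  have h5 : (p.parts.prod : ℝ) ≠ 0 := by
    have : 0 < p.parts.prod := Multiset.prod_pos fun a ha => p.parts_pos ha
    exact_mod_cast this.ne'
  rw [h3, wt, ← h2', inv_div]
  field_simp


lemma SP_count (θ : ℝ) (N j : ℕ) (hj : 1 ≤ j) (hjN : j ≤ N) :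
    SP θ N (fun s => (s.count j : ℝ)) = θ / j * HH θ (N - j) := by
  have h := SP_cons θ N j hj hjN (fun _ => (1 : ℝ))
  have hj0 : (j : ℝ) ≠ 0 := by positivity
  rw [SP_one] at h
  have h2 := SP_smul θ N (j : ℝ) (fun s => (s.count j : ℝ))
  simp only [smul_eq_mul, mul_one] at h h2
  rw [h2] at h
  field_simp
  linarith

lemma SP_count_count (θ : ℝ) (N i j : ℕ) (hi : 1 ≤ i) (hj : 1 ≤ j) (hijN : i + j ≤ N) :
    SP θ N (fun s => (s.count i : ℝ) * (s.count j : ℝ)) =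
      θ / i * (θ / j) * HH θ (N - i - j) + if i = j then θ / i * HH θ (N - i) else 0 := by
  have h := SP_cons θ N i hi (by omega) (fun s => (s.count j : ℝ))
  have hi0 : (i : ℝ) ≠ 0 := by positivity
  have h2 := SP_smul θ N (i : ℝ) (fun s => (s.count i : ℝ) * (s.count j : ℝ))
  simp only [smul_eq_mul] at h h2
  simp only [mul_assoc] at h
  rw [h2] at h
  have h3 : SP θ (N - i) (fun s => ((i ::ₘ s).count j : ℝ)) =
      θ / j * HH θ (N - i - j) + if i = j then HH θ (N - i) else 0 := by
    rw [← SP_count θ (N - i) j hj (by omega)]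
    split_ifs with hij
    · subst hij
      rw [← SP_one θ (N - i), ← SP_add]
      simp
    · rw [add_zero]
      congr 1
      funext s
      rw [Multiset.count_cons_of_ne (Ne.symm hij)]
  rw [h3] at h
  apply mul_left_cancel₀ hi0
  rw [h]
  split_ifs
  · field_simp
  · field_simp; ring

lemma mul_HH_mono (θ : ℝ) (hθ : 0 < θ) {m n : ℕ} (h : m ≤ n) :
    (m : ℝ) * HH θ m ≤ (n : ℝ) * HH θ n := by
  induction n, h using Nat.le_induction with
  | base => exact le_rfl
  | succ n _ ih =>
    push_cast
    rw [HH_succ]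
    have := HH_pos θ hθ n
    nlinarith

lemma HH_le (θ : ℝ) (hθ : 0 < θ) {m n : ℕ} (hn : 1 ≤ n) (h : m ≤ n) :
    HH θ m ≤ (1 + 1 / θ) * n * HH θ n := by
  have hp := HH_pos θ hθ n
  have hn' : (1 : ℝ) ≤ n := by exact_mod_cast hn
  have h0 : 0 ≤ 1 / θ * n * HH θ n := by positivity
  rcases Nat.eq_zero_or_pos m with rfl | hm
  · have h1 := mul_HH_mono θ hθ hn
    have : HH θ 1 = θ := by simp [HH]
    rw [this] at h1
    rw [HH_zero]
    have : 1 ≤ 1 / θ * n * HH θ n := by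
      rw [mul_assoc, div_mul_eq_mul_div, le_div_iff₀ hθ]
      push_cast at h1
      linarith
    nlinarith
  · have h1 := mul_HH_mono θ hθ h
    have hm' : (1 : ℝ) ≤ m := by exact_mod_cast hm
    have := HH_pos θ hθ m
    nlinarith

lemma HH_le_two (θ : ℝ) (hθ : 0 < θ) {m n : ℕ} (hn : 1 ≤ n) (h : m ≤ n) (h2 : n ≤ 2 * m) :
    HH θ m ≤ 2 * HH θ n := by
  have h1 := mul_HH_mono θ hθ h
  have hp := HH_pos θ hθ n
  have hm : (0 : ℝ) < m := by
    have : 0 < m := by omega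
    exact_mod_cast this
  have h2' : (n : ℝ) ≤ 2 * m := by exact_mod_cast h2
  have : (m : ℝ) * HH θ m ≤ m * (2 * HH θ n) := by nlinarith
  exact le_of_mul_le_mul_left this hm

lemma HH_diff (θ : ℝ) (hθ : 0 < θ) (N k : ℕ) (hN : 1 ≤ N) (hk : 2 * k ≤ N) :
    |HH θ (N - k) - HH θ N| ≤ 4 * |θ - 1| * k / N * HH θ N := by
  have hN' : (0 : ℝ) < N := by exact_mod_cast hN
  have hp := HH_pos θ hθ N
  induction k with
  | zero => simp
  | succ k ih =>
    have ih := ih (by omega)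
    obtain ⟨m, hm⟩ : ∃ m, N = m + (k + 1) := ⟨N - (k + 1), by omega⟩
    have e1 : N - (k + 1) = m := by omega
    have e2 : N - k = m + 1 := by omega
    rw [e1]
    rw [e2] at ih
    have hs := HH_succ θ m
    have hm2 : HH θ m ≤ 2 * HH θ N := HH_le_two θ hθ hN (by omega) (by omega)
    have hm0 := HH_pos θ hθ m
    have hm1 : (0 : ℝ) < (m : ℝ) + 1 := by positivity
    have hd : |HH θ m - HH θ (m + 1)| = |θ - 1| * HH θ m / (m + 1) := by
      have : HH θ m - HH θ (m + 1) = -((θ - 1) * HH θ m / (m + 1)) := by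
        field_simp; linarith
      rw [this, abs_neg, abs_div, abs_mul, abs_of_pos hm0, abs_of_pos hm1]
    have hd2 : |HH θ m - HH θ (m + 1)| ≤ 4 * |θ - 1| / N * HH θ N := by
      rw [hd, div_mul_eq_mul_div, div_le_div_iff₀ hm1 hN']
      have hNm : (N : ℝ) ≤ 2 * (m + 1) := by
        have : N ≤ 2 * (m + 1) := by omega
        exact_mod_cast this
      have ha := abs_nonneg (θ - 1)
      calc |θ - 1| * HH θ m * N ≤ |θ - 1| * (2 * HH θ N) * (2 * (m + 1)) := by gcongr
        _ = _ := by ring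
    calc |HH θ m - HH θ N| ≤ |HH θ m - HH θ (m + 1)| + |HH θ (m + 1) - HH θ N| :=
          abs_sub_le _ _ _
      _ ≤ 4 * |θ - 1| / N * HH θ N + 4 * |θ - 1| * k / N * HH θ N := add_le_add hd2 ih
      _ = _ := by push_cast; ring

lemma HH_ratio (θ : ℝ) (hθ : 0 < θ) (N k : ℕ) (hN : 1 ≤ N) (hk : 2 * k ≤ N) :
    |HH θ (N - k) / HH θ N - 1| ≤ 4 * |θ - 1| * k / N := by
  have hp := HH_pos θ hθ N
  have : HH θ (N - k) / HH θ N - 1 = (HH θ (N - k) - HH θ N) / HH θ N := by field_simp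
  rw [this, abs_div, abs_of_pos hp, div_le_iff₀ hp]
  exact HH_diff θ hθ N k hN hk

lemma HH_ratio_le (θ : ℝ) (hθ : 0 < θ) (N k : ℕ) (hN : 1 ≤ N) (hk : 2 * k ≤ N) :
    HH θ (N - k) / HH θ N ≤ 2 := by
  rw [div_le_iff₀ (HH_pos θ hθ N)]
  exact HH_le_two θ hθ hN (by omega) (by omega)


open PowerSeries in
lemma gen_single (j : ℕ) (hj : 0 < j) (y : ℂ) : ∃ e : PowerSeries ℂ,
    coeff 0 e = 1 ∧
    X * derivative ℂ e = (C y * X ^ j) * e ∧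
    (∀ r : ℝ, 0 ≤ r → HasSum (fun k => ‖coeff k e‖ * r ^ k) (Real.exp (‖y‖ * r ^ j / j))) ∧
    HasSum (fun k => coeff k e) (Complex.exp (y / j)) := by
  classical
  let f : ℕ → ℂ := fun m => (y / j) ^ m / (m.factorial : ℂ)
  let e : PowerSeries ℂ := PowerSeries.mk fun k => if j ∣ k then f (k / j) else 0
  have hjc : (j : ℂ) ≠ 0 := by exact_mod_cast hj.ne'
  have hjr : (j : ℝ) ≠ 0 := by exact_mod_cast hj.ne'
  have hcoe : ∀ k, coeff k e = if j ∣ k then f (k / j) else 0 := fun k => by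
    simp [e]
  have hinj : Function.Injective (fun m : ℕ => j * m) := fun a b h =>
    Nat.eq_of_mul_eq_mul_left hj h
  have hsupp : ∀ k, k ∉ Set.range (fun m : ℕ => j * m) → coeff k e = 0 := by
    intro k hk
    rw [hcoe, if_neg]
    rintro ⟨m, rfl⟩
    exact hk ⟨m, rfl⟩
  have hval : ∀ m, coeff (j * m) e = f m := by
    intro m
    rw [hcoe, if_pos (dvd_mul_right j m), Nat.mul_div_cancel_left _ hj]
  refine ⟨e, ?_, ?_, ?_, ?_⟩
  · have := hval 0
    rw [mul_zero] at this
    rw [this]; simp [f]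
  · ext k
    rw [mul_assoc, PowerSeries.coeff_C_mul, PowerSeries.coeff_X_pow_mul', mul_ite, mul_zero]
    rcases Nat.eq_zero_or_pos k with rfl | hk
    · rw [if_neg (by omega)]
      simp
    · obtain ⟨l, rfl⟩ : ∃ l, k = l + 1 := ⟨k - 1, by omega⟩
      rw [PowerSeries.coeff_succ_X_mul, PowerSeries.coeff_derivative]
      by_cases hd : j ∣ l + 1
      · obtain ⟨m, hm⟩ := hd
        have hm0 : 0 < m := by
          rcases Nat.eq_zero_or_pos m with rfl | h
          · simp at hm
          · exact h
        obtain ⟨m', rfl⟩ : ∃ m', m = m' + 1 := ⟨m - 1, by omega⟩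
        have hle : j ≤ l + 1 := by rw [hm]; exact Nat.le_mul_of_pos_right _ hm0
        rw [if_pos hle]
        have e2 : l + 1 - j = j * m' := by rw [hm, mul_add]; simp
        rw [e2, hm, hval, hval]
        have : ((l : ℂ) + 1) = j * (m' + 1) := by exact_mod_cast hm
        rw [this]
        simp only [f]
        rw [Nat.factorial_succ, pow_succ]
        have h1 : ((m' : ℂ) + 1) ≠ 0 := by exact_mod_cast (Nat.succ_ne_zero m')
        have h2 : (m'.factorial : ℂ) ≠ 0 := by exact_mod_cast (Nat.factorial_ne_zero m')
        push_cast
        field_simp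
      · rw [hcoe, if_neg hd, zero_mul]
        split_ifs with hle
        · rw [hcoe, if_neg, mul_zero]
          intro h
          apply hd
          have := Nat.dvd_add h (dvd_refl j)
          rwa [Nat.sub_add_cancel hle] at this
        · rfl
  · intro r hr
    rw [← hinj.hasSum_iff]
    · have h := NormedSpace.expSeries_div_hasSum_exp (‖y‖ * r ^ j / j : ℝ)
      rw [← Real.exp_eq_exp_ℝ] at h
      convert! h using 1
      funext m
      simp only [Function.comp]
      rw [hval]
      simp only [f]
      rw [norm_div, norm_pow, norm_div]
      simp only [Complex.norm_natCast]
      rw [pow_mul]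
      rw [div_pow, div_pow, mul_pow]
      ring
    · intro k hk
      rw [hsupp k hk]; simp
  · rw [← hinj.hasSum_iff]
    · have h := NormedSpace.expSeries_div_hasSum_exp (y / j : ℂ)
      rw [← Complex.exp_eq_exp_ℂ] at h
      convert! h using 1
      funext m
      simp only [Function.comp]
      rw [hval]
    · intro k hk
      rw [hsupp k hk]

open PowerSeries in
lemma gen_exists (S : Finset ℕ) (hS : 0 ∉ S) (y : ℕ → ℂ) : ∃ e : PowerSeries ℂ,
    coeff 0 e = 1 ∧
    X * derivative ℂ e = (PowerSeries.mk fun k => if k ∈ S then y k else 0) * e ∧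
    (∀ r : ℝ, 0 ≤ r → Summable (fun k => ‖coeff k e‖ * r ^ k) ∧
      ∑' k, ‖coeff k e‖ * r ^ k ≤ Real.exp (∑ j ∈ S, ‖y j‖ * r ^ j / j)) ∧
    HasSum (fun k => coeff k e) (Complex.exp (∑ j ∈ S, y j / j)) := by
  classical
  induction S using Finset.induction_on with
  | empty =>
    refine ⟨1, by simp, ?_, ?_, ?_⟩
    · ext k; simp
    · intro r hr
      have : HasSum (fun k => ‖coeff k (1 : PowerSeries ℂ)‖ * r ^ k) 1 := by
        convert! hasSum_ite_eq 0 (1 : ℝ) using 1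
        funext k
        rw [PowerSeries.coeff_one]
        split_ifs with h
        · subst h; simp
        · simp
      exact ⟨this.summable, by rw [this.tsum_eq]; simp⟩
    · simp only [Finset.sum_empty, Complex.exp_zero, PowerSeries.coeff_one]
      exact hasSum_ite_eq 0 1
  | insert j S hjS ih =>
    have hj : 0 < j := by
      rcases Nat.eq_zero_or_pos j with rfl | h
      · simp at hS
      · exact h
    obtain ⟨g, g0, gd, gs, gh⟩ := ih (fun h => hS (Finset.mem_insert_of_mem h))
    obtain ⟨e, e0, ed, es, eh⟩ := gen_single j hj (y j)
    refine ⟨e * g, ?_, ?_, ?_, ?_⟩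
    · rw [PowerSeries.coeff_mul]; simp at g0 e0; simp [e0, g0]
    · have hL : (PowerSeries.mk fun k => if k ∈ insert j S then y k else 0) =
          C (y j) * X ^ j + (PowerSeries.mk fun k => if k ∈ S then y k else 0) := by
        ext k
        rw [map_add, PowerSeries.coeff_C_mul, PowerSeries.coeff_X_pow, PowerSeries.coeff_mk, PowerSeries.coeff_mk]
        by_cases h : k = j
        · subst h; simp [hjS]
        · simp [h]
      rw [hL, Derivation.leibniz, smul_eq_mul, smul_eq_mul]
      linear_combination e * gd + g * ed
    · intro r hr
      have h1 := (es r hr).summable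
      have h2 := (gs r hr).1
      have h1' : Summable fun k => ‖‖coeff k e‖ * r ^ k‖ := h1.norm
      have h2' : Summable fun k => ‖‖coeff k g‖ * r ^ k‖ := h2.norm
      have hs := (summable_norm_sum_mul_antidiagonal_of_summable_norm h1' h2').of_norm
      have ht := tsum_mul_tsum_eq_tsum_sum_antidiagonal_of_summable_norm h1' h2'
      have hle : ∀ k, ‖coeff k (e * g)‖ * r ^ k ≤
          ∑ p ∈ Finset.HasAntidiagonal.antidiagonal k, ‖coeff p.1 e‖ * r ^ p.1 * (‖coeff p.2 g‖ * r ^ p.2) := by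
        intro k
        rw [PowerSeries.coeff_mul]
        calc _ ≤ (∑ p ∈ Finset.HasAntidiagonal.antidiagonal k, ‖coeff p.1 e * coeff p.2 g‖) * r ^ k := by
              gcongr; exact norm_sum_le _ _
          _ = _ := by
              rw [Finset.sum_mul]
              refine Finset.sum_congr rfl fun p hp => ?_
              rw [← Finset.HasAntidiagonal.mem_antidiagonal.1 hp, pow_add, norm_mul]; ring
      have hs' : Summable (fun k => ‖coeff k (e * g)‖ * r ^ k) :=
        Summable.of_nonneg_of_le (fun k => by positivity) hle hs
      refine ⟨hs', (hs'.tsum_le_tsum hle hs).trans ?_⟩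
      rw [← ht, (es r hr).tsum_eq, Finset.sum_insert hjS, Real.exp_add]
      gcongr
      exact (gs r hr).2
    · have h1 : Summable fun k => ‖coeff k e‖ := by
        simpa using (es 1 zero_le_one).summable
      have h2 : Summable fun k => ‖coeff k g‖ := by
        simpa using (gs 1 zero_le_one).1
      have hs := (summable_norm_sum_mul_antidiagonal_of_summable_norm h1 h2).of_norm
      have ht := tsum_mul_tsum_eq_tsum_sum_antidiagonal_of_summable_norm h1 h2
      rw [Finset.sum_insert hjS, Complex.exp_add, ← eh.tsum_eq, ← gh.tsum_eq, ht]
      simp only [PowerSeries.coeff_mul]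
      exact hs.hasSum


open PowerSeries in
lemma coeff_XD (f : PowerSeries ℂ) (n : ℕ) :
    coeff n (X * derivative ℂ f) = n * coeff n f := by
  cases n with
  | zero => simp
  | succ n =>
    rw [PowerSeries.coeff_succ_X_mul, PowerSeries.coeff_derivative]
    push_cast; ring

open PowerSeries in
lemma XD_unique (L f g : PowerSeries ℂ) (hL : coeff 0 L = 0) (hf0 : coeff 0 f = 1)
    (hg0 : coeff 0 g = 1) (hf : X * derivative ℂ f = L * f) (hg : X * derivative ℂ g = L * g) :
    f = g := by
  ext n
  induction n using Nat.strong_induction_on with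
  | _ n ih =>
    rcases Nat.eq_zero_or_pos n with rfl | hn
    · rw [hf0, hg0]
    · have h1 := congrArg (coeff n) hf
      have h2 := congrArg (coeff n) hg
      rw [coeff_XD, PowerSeries.coeff_mul] at h1 h2
      have hn' : (n : ℂ) ≠ 0 := by exact_mod_cast hn.ne'
      apply mul_left_cancel₀ hn'
      rw [h1, h2]
      refine Finset.sum_congr rfl fun p hp => ?_
      have hp := Finset.HasAntidiagonal.mem_antidiagonal.1 hp
      rcases Nat.eq_zero_or_pos p.1 with h | h
      · rw [h, hL]; simp
      · rw [ih p.2 (by omega)]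

open PowerSeries in
lemma coeff_L_mul (L : ℕ → ℂ) (h : ℕ → ℂ) (hL : L 0 = 0) (n : ℕ) :
    coeff n (PowerSeries.mk L * PowerSeries.mk h) =
      ∑ j ∈ Finset.Icc 1 n, L j * h (n - j) := by
  rw [PowerSeries.coeff_mul]
  simp only [PowerSeries.coeff_mk]
  rw [Finset.Nat.sum_antidiagonal_eq_sum_range_succ (fun a b => L a * h b),
    Finset.range_eq_Ico, Finset.sum_eq_sum_Ico_succ_bot (by omega), hL, zero_mul, zero_add]
  rfl

open PowerSeries in
lemma SP_mult (θ : ℝ) (v : ℕ → ℂ) :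
    let h := PowerSeries.mk fun n => SP θ n (fun s => (s.map v).prod)
    coeff 0 h = 1 ∧
    X * derivative ℂ h = (PowerSeries.mk fun k => if k = 0 then 0 else (θ : ℂ) * v k) * h := by
  intro h
  constructor
  · simp only [h, PowerSeries.coeff_mk]; rw [SP_zero]; simp
  · ext n
    rw [coeff_XD, coeff_L_mul _ _ (by simp), PowerSeries.coeff_mk]
    have := SP_rec θ n (fun s => (s.map v).prod)
    rw [Complex.real_smul] at this
    push_cast at this
    rw [this]
    refine Finset.sum_congr rfl fun j hj => ?_
    have hj0 : j ≠ 0 := by have := (Finset.mem_Icc.1 hj).1; omega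
    rw [if_neg hj0]
    simp only [Multiset.map_cons, Multiset.prod_cons]
    have h2 : SP θ (n - j) (fun s => v j * (s.map v).prod) =
        v j * SP θ (n - j) (fun s => (s.map v).prod) := by
      unfold SP
      rw [Finset.mul_sum]
      refine Finset.sum_congr rfl fun p _ => ?_
      rw [mul_smul_comm]
    rw [h2, Complex.real_smul]; ring

lemma SP_one_complex (θ : ℝ) (n : ℕ) : SP θ n (fun _ => (1 : ℂ)) = (HH θ n : ℂ) := by
  rw [← SP_one]
  unfold SP
  push_cast
  refine Finset.sum_congr rfl fun p _ => ?_
  simp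

open PowerSeries in
lemma SP_conv (θ : ℝ) (S : Finset ℕ) (hS : 0 ∉ S) (v : ℕ → ℂ) (hv : ∀ j, j ∉ S → v j = 1)
    (e : PowerSeries ℂ) (e0 : coeff 0 e = 1)
    (ed : X * derivative ℂ e =
      (PowerSeries.mk fun k => if k ∈ S then (θ : ℂ) * (v k - 1) else 0) * e) (N : ℕ) :
    SP θ N (fun s => (s.map v).prod) =
      ∑ k ∈ Finset.range (N + 1), coeff k e * (HH θ (N - k) : ℂ) := by
  obtain ⟨h0, h1⟩ := SP_mult θ v
  obtain ⟨k0, k1⟩ := SP_mult θ (fun _ => 1)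
  set h := PowerSeries.mk fun n => SP θ n (fun s => (s.map v).prod) with hh
  set k := PowerSeries.mk fun n => SP θ n (fun s => (s.map (fun _ => (1 : ℂ))).prod) with hk
  have hkc : ∀ n, coeff n k = (HH θ n : ℂ) := by
    intro n
    rw [hk, PowerSeries.coeff_mk, ← SP_one_complex]
    congr 1
    funext s
    simp
  have heq : h = e * k := by
    refine XD_unique _ _ _ ?_ h0 ?_ h1 ?_
    · simp
    · rw [PowerSeries.coeff_mul]; simp at e0 k0; simp [e0, k0]
    · have hL : (PowerSeries.mk fun k => if k = 0 then 0 else (θ : ℂ) * v k) =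
          (PowerSeries.mk fun k => if k ∈ S then (θ : ℂ) * (v k - 1) else 0) +
          (PowerSeries.mk fun k => if k = 0 then 0 else (θ : ℂ) * 1) := by
        ext n
        rw [map_add, PowerSeries.coeff_mk, PowerSeries.coeff_mk, PowerSeries.coeff_mk]
        by_cases hn : n = 0
        · subst hn; simp [hS]
        · by_cases hnS : n ∈ S
          · simp [hn, hnS]; ring
          · simp [hn, hnS, hv n hnS]
      rw [hL, Derivation.leibniz, smul_eq_mul, smul_eq_mul]
      linear_combination e * k1 + k * ed
  have := congrArg (coeff N) heq
  rw [hh, PowerSeries.coeff_mk, PowerSeries.coeff_mul] at this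
  rw [this, Finset.Nat.sum_antidiagonal_eq_sum_range_succ (fun a b => coeff a e * coeff b k)]
  refine Finset.sum_congr rfl fun j _ => ?_
  rw [hkc]

lemma norm_exp_I_sub_one (x : ℝ) : ‖Complex.exp (Complex.I * x) - 1‖ ≤ |x| := by
  have := Real.norm_exp_I_mul_ofReal_sub_one_le (x := x)
  simpa using this

open PowerSeries in
lemma main_est (θ : ℝ) (hθ : 0 < θ) (N M : ℕ) (hN : 1 ≤ N) (hM : 1 ≤ M) (s : ℝ)
    (u : ℕ → ℝ) (hu : ∀ j, |u j| ≤ 1) (v : ℕ → ℂ)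
    (hv : ∀ j, v j = if j ∈ Finset.Icc 1 M then Complex.exp (Complex.I * ((s * u j : ℝ) : ℂ)) else 1) :
    ‖(HH θ N)⁻¹ • SP θ N (fun t => (t.map v).prod) -
      Complex.exp (∑ j ∈ Finset.Icc 1 M,
        (θ : ℂ) * (Complex.exp (Complex.I * ((s * u j : ℝ) : ℂ)) - 1) / j)‖ ≤
      (4 * |θ - 1| * (M / N) + ((1 + 1 / θ) * N + 1) * Real.exp (-(N / (2 * M)))) *
      Real.exp (θ * |s| * Real.exp 1 * ∑ j ∈ Finset.Icc 1 M, (1 : ℝ) / j) := by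
  obtain ⟨e, e0, ed, es, eh⟩ := gen_exists (Finset.Icc 1 M) (by simp)
    (fun j => (θ : ℂ) * (v j - 1))
  have hconv := SP_conv θ (Finset.Icc 1 M) (by simp) v
    (fun j hj => by rw [hv, if_neg hj]) e e0 ed N
  have hMr : (0 : ℝ) < M := by exact_mod_cast hM
  have hNr : (0 : ℝ) < N := by exact_mod_cast hN
  set r := Real.exp (1 / M) with hr
  have hr0 : 0 ≤ r := (Real.exp_pos _).le
  obtain ⟨s1, s2⟩ := es r hr0
  have hHN := HH_pos θ hθ N
  -- exponent rewriting
  have hexp : ∑ j ∈ Finset.Icc 1 M, (θ : ℂ) * (v j - 1) / j = ∑ j ∈ Finset.Icc 1 M,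
        (θ : ℂ) * (Complex.exp (Complex.I * ((s * u j : ℝ) : ℂ)) - 1) / j :=
    Finset.sum_congr rfl fun j hj => by rw [hv, if_pos hj]
  rw [hexp] at eh
  rw [← eh.tsum_eq]
  let ρ : ℕ → ℝ := fun k => if k ≤ N then HH θ (N - k) / HH θ N else 0
  have hfin : (HH θ N)⁻¹ • SP θ N (fun t => (t.map v).prod) = ∑' k, coeff k e * (ρ k : ℂ) := by
    rw [tsum_eq_sum (s := Finset.range (N + 1))]
    · rw [hconv, Finset.smul_sum]
      refine Finset.sum_congr rfl fun k hk => ?_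
      have : k ≤ N := by have := Finset.mem_range.1 hk; omega
      simp only [ρ, if_pos this, Complex.real_smul]
      push_cast
      ring
    · intro k hk
      have : ¬ k ≤ N := by intro h; exact hk (Finset.mem_range.2 (by omega))
      simp [ρ, this]
  have hsum1 : Summable fun k => coeff k e * (ρ k : ℂ) := by
    apply summable_of_ne_finset_zero (s := Finset.range (N + 1))
    intro k hk
    have : ¬ k ≤ N := by intro h; exact hk (Finset.mem_range.2 (by omega))
    simp [ρ, this]
  rw [hfin, ← hsum1.tsum_sub eh.summable]
  set B := (4 * |θ - 1| * (M / N) + ((1 + 1 / θ) * N + 1) * Real.exp (-(N / (2 * M)))) with hB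
  have hrk : ∀ k : ℕ, r ^ k = Real.exp (k / M) := by
    intro k
    rw [hr, ← Real.exp_nat_mul]; congr 1; ring
  have hρ : ∀ k, |ρ k - 1| ≤ B * r ^ k := by
    intro k
    rw [hrk]
    have hB1 : 0 ≤ 4 * |θ - 1| * ((M : ℝ) / N) := by positivity
    have hB2 : 0 ≤ ((1 + 1 / θ) * N + 1) * Real.exp (-(N / (2 * M))) := by positivity
    by_cases hk : 2 * k ≤ N
    · simp only [ρ, if_pos (show k ≤ N by omega)]
      refine (HH_ratio θ hθ N k hN hk).trans ?_
      have h1 : (k : ℝ) / M ≤ Real.exp (k / M) := by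
        have := Real.add_one_le_exp ((k : ℝ) / M); linarith
      calc 4 * |θ - 1| * k / N = 4 * |θ - 1| * (M / N) * (k / M) := by field_simp
        _ ≤ 4 * |θ - 1| * (M / N) * Real.exp (k / M) := by gcongr
        _ ≤ _ := by rw [hB]; gcongr; linarith
    · have h1 : |ρ k - 1| ≤ (1 + 1 / θ) * N + 1 := by
        have h0 : 0 ≤ ρ k := by
          simp only [ρ]; split_ifs
          · exact div_nonneg (HH_pos θ hθ _).le hHN.le
          · exact le_rfl
        have h2 : ρ k ≤ (1 + 1 / θ) * N := by
          simp only [ρ]; split_ifs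
          · rw [div_le_iff₀ hHN]
            exact HH_le θ hθ hN (by omega)
          · positivity
        rw [abs_le]; constructor <;> nlinarith
      have hk' : (N : ℝ) ≤ 2 * k := by
        have : N ≤ 2 * k := by omega
        exact_mod_cast this
      calc |ρ k - 1| ≤ ((1 + 1 / θ) * N + 1) * 1 := by linarith
        _ ≤ ((1 + 1 / θ) * N + 1) * (Real.exp (-(N / (2 * M))) * Real.exp (k / M)) := by
          gcongr
          rw [← Real.exp_add, Real.one_le_exp_iff]
          have : (N : ℝ) / (2 * M) ≤ k / M := by
            rw [div_le_div_iff₀ (by positivity) hMr]; nlinarith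
          linarith
        _ = ((1 + 1 / θ) * N + 1) * Real.exp (-(N / (2 * M))) * Real.exp (k / M) := by ring
        _ ≤ _ := by rw [hB]; gcongr; linarith
  have hb : ∀ k, ‖coeff k e * (ρ k : ℂ) - coeff k e‖ ≤ B * (‖coeff k e‖ * r ^ k) := by
    intro k
    have : coeff k e * (ρ k : ℂ) - coeff k e = coeff k e * ((ρ k - 1 : ℝ) : ℂ) := by
      push_cast; ring
    rw [this, norm_mul, Complex.norm_real, Real.norm_eq_abs]
    calc _ ≤ ‖coeff k e‖ * (B * r ^ k) := by gcongr; exact hρ k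
      _ = _ := by ring
  have hS := s1.mul_left B
  refine (tsum_of_norm_bounded hS.hasSum hb).trans ?_
  rw [tsum_mul_left]
  have hB0 : 0 ≤ B := by rw [hB]; positivity
  gcongr
  refine s2.trans ?_
  rw [Real.exp_le_exp, Finset.mul_sum]
  refine Finset.sum_le_sum fun j hj => ?_
  obtain ⟨hj1, hj2⟩ := Finset.mem_Icc.1 hj
  have hj1' : (0 : ℝ) < j := by exact_mod_cast hj1
  have hn : ‖(θ : ℂ) * (v j - 1)‖ ≤ θ * |s| := by
    rw [norm_mul, Complex.norm_real, Real.norm_of_nonneg hθ.le, hv, if_pos hj]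
    gcongr
    refine (norm_exp_I_sub_one _).trans ?_
    rw [abs_mul]
    exact mul_le_of_le_one_right (abs_nonneg s) (hu j)
  have hrj : r ^ j ≤ Real.exp 1 := by
    rw [hrk, Real.exp_le_exp, div_le_one hMr]
    exact_mod_cast hj2
  calc ‖(θ : ℂ) * (v j - 1)‖ * r ^ j / j ≤ (θ * |s|) * Real.exp 1 / j := by gcongr
    _ = _ := by ring


/-- Ewens expectation of a function of the cycle lengths. -/
noncomputable def EE {E : Type*} [AddCommGroup E] [Module ℝ E] (θ : ℝ) (N : ℕ)
    (F : Multiset ℕ → E) : E := (HH θ N)⁻¹ • SP θ N F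

lemma wt_nonneg (θ : ℝ) (hθ : 0 < θ) (s : Multiset ℕ) : 0 ≤ wt θ s := by
  unfold wt; positivity

lemma EE_mono (θ : ℝ) (hθ : 0 < θ) (N : ℕ) (F G : Multiset ℕ → ℝ)
    (h : ∀ p : N.Partition, F p.parts ≤ G p.parts) : EE θ N F ≤ EE θ N G := by
  unfold EE SP
  simp only [smul_eq_mul]
  have := HH_pos θ hθ N
  gcongr with p _
  · exact wt_nonneg θ hθ _
  · exact h p

lemma EE_congr {E : Type*} [AddCommGroup E] [Module ℝ E] (θ : ℝ) (N : ℕ)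
    (F G : Multiset ℕ → E)
    (h : ∀ p : N.Partition, F p.parts = G p.parts) : EE θ N F = EE θ N G := by
  unfold EE SP
  congr 1
  exact Finset.sum_congr rfl fun p _ => by rw [h p]

lemma EE_norm_le (θ : ℝ) (hθ : 0 < θ) (N : ℕ) (F : Multiset ℕ → ℂ) :
    ‖EE θ N F‖ ≤ EE θ N (fun s => ‖F s‖) := by
  unfold EE SP
  have := HH_pos θ hθ N
  rw [norm_smul, Real.norm_of_nonneg (inv_pos.2 this).le, smul_eq_mul]
  gcongr
  refine (norm_sum_le _ _).trans (Finset.sum_le_sum fun p _ => ?_)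
  rw [norm_smul, Real.norm_of_nonneg (wt_nonneg θ hθ _), smul_eq_mul]

section
variable {E : Type*} [AddCommGroup E] [Module ℝ E]

lemma EE_add (θ : ℝ) (N : ℕ) (F G : Multiset ℕ → E) :
    EE θ N (fun s => F s + G s) = EE θ N F + EE θ N G := by
  unfold EE; rw [SP_add, smul_add]

lemma EE_sum {ι : Type*} (θ : ℝ) (n : ℕ) (T : Finset ι) (F : ι → Multiset ℕ → E) :
    EE θ n (fun s => ∑ i ∈ T, F i s) = ∑ i ∈ T, EE θ n (F i) := by
  unfold EE; rw [SP_sum, Finset.smul_sum]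

lemma EE_smul (θ : ℝ) (n : ℕ) (c : ℝ) (F : Multiset ℕ → E) :
    EE θ n (fun s => c • F s) = c • EE θ n F := by
  unfold EE; rw [SP_smul, smul_comm]

lemma EE_sub (θ : ℝ) (N : ℕ) (F G : Multiset ℕ → E) :
    EE θ N (fun s => F s - G s) = EE θ N F - EE θ N G := by
  have : (fun s => F s - G s) = fun s => F s + (-1 : ℝ) • G s := by
    funext s; simp [sub_eq_add_neg]
  rw [this, EE_add, EE_smul]; simp [sub_eq_add_neg]
end

lemma EE_mul (θ : ℝ) (n : ℕ) (c : ℝ) (F : Multiset ℕ → ℝ) :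
    EE θ n (fun s => c * F s) = c * EE θ n F := EE_smul θ n c F

lemma EE_const (θ : ℝ) (hθ : 0 < θ) (n : ℕ) (c : ℝ) : EE θ n (fun _ => c) = c := by
  have h := EE_mul θ n c (fun _ => 1)
  simp only [mul_one] at h
  rw [h, EE, SP_one, smul_eq_mul, inv_mul_cancel₀ (HH_pos θ hθ n).ne', mul_one]

lemma EE_abs_le (θ : ℝ) (hθ : 0 < θ) (N : ℕ) (W : Multiset ℕ → ℝ) (D : ℝ) (hD : 0 < D)
    (h : EE θ N (fun s => W s ^ 2) ≤ D) : EE θ N (fun s => |W s|) ≤ √D := by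
  have hd : 0 < √D := Real.sqrt_pos.2 hD
  have hdd : √D * √D = D := Real.mul_self_sqrt hD.le
  have h1 : EE θ N (fun s => |W s|) ≤ EE θ N (fun s => 1 / (2 * √D) * W s ^ 2 + √D / 2) := by
    refine EE_mono θ hθ N _ _ fun p => ?_
    rw [div_mul_eq_mul_div, div_add_div _ _ (by positivity) (by positivity),
      le_div_iff₀ (by positivity), ← sq_abs (W p.parts)]
    nlinarith [mul_self_nonneg (|W p.parts| - √D)]
  refine h1.trans ?_
  rw [EE_add, EE_mul, EE_const θ hθ]
  have : 1 / (2 * √D) * EE θ N (fun s => W s ^ 2) ≤ 1 / (2 * √D) * D := by gcongr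
  have e : 1 / (2 * √D) * D = √D / 2 := by
    field_simp; nlinarith
  linarith

lemma EE_count (θ : ℝ) (N j : ℕ) (hj : 1 ≤ j) (hjN : j ≤ N) :
    EE θ N (fun s => (s.count j : ℝ)) = θ / j * (HH θ (N - j) / HH θ N) := by
  rw [EE, SP_count θ N j hj hjN, smul_eq_mul]; ring

lemma EE_count_nonneg (θ : ℝ) (hθ : 0 < θ) (N j : ℕ) :
    0 ≤ EE θ N (fun s => (s.count j : ℝ)) := by
  rw [← EE_const θ hθ N 0]
  exact EE_mono θ hθ N _ _ fun p => by positivity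

lemma EE_large (θ : ℝ) (hθ : 0 < θ) (N : ℕ) (hN : 1 ≤ N) :
    ∑ j ∈ Finset.Icc (N / 4 + 1) N, EE θ N (fun s => (s.count j : ℝ)) ≤ 4 := by
  have hH := HH_pos θ hθ N
  have hN' : (0 : ℝ) < N := by exact_mod_cast hN
  calc ∑ j ∈ Finset.Icc (N / 4 + 1) N, EE θ N (fun s => (s.count j : ℝ))
      ≤ ∑ j ∈ Finset.Icc (N / 4 + 1) N, 4 * θ / N * (HH θ (N - j) / HH θ N) := by
        refine Finset.sum_le_sum fun j hj => ?_
        obtain ⟨h1, h2⟩ := Finset.mem_Icc.1 hj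
        rw [EE_count θ N j (by omega) h2]
        have hj0 : (0 : ℝ) < j := by
          have : 0 < j := by omega
          exact_mod_cast this
        have hj4 : (N : ℝ) ≤ 4 * j := by
          have : N ≤ 4 * j := by omega
          exact_mod_cast this
        have := HH_pos θ hθ (N - j)
        gcongr ?_ * _
        rw [div_le_div_iff₀ hj0 hN']
        nlinarith
    _ ≤ ∑ j ∈ Finset.Icc 1 N, 4 * θ / N * (HH θ (N - j) / HH θ N) := by
        refine Finset.sum_le_sum_of_subset_of_nonneg (Finset.Icc_subset_Icc_left (by omega)) ?_
        intro j _ _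
        have := HH_pos θ hθ (N - j)
        positivity
    _ = 4 := by
        rw [sum_Icc_reflect_one N (fun k => 4 * θ / N * (HH θ k / HH θ N)), ← Finset.mul_sum,
          ← Finset.sum_div]
        have := HH_sum θ N
        have h2 : ∑ k ∈ Finset.range N, HH θ k = N * HH θ N / θ := by
          rw [this]; field_simp
        rw [h2]; field_simp

lemma EE_cov (θ : ℝ) (hθ : 0 < θ) (N i j : ℕ) (hN : 1 ≤ N) (hi : 1 ≤ i) (hj : 1 ≤ j)
    (hi4 : 4 * i ≤ N) (hj4 : 4 * j ≤ N) :
    |EE θ N (fun s => (s.count i : ℝ) * (s.count j : ℝ)) -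
      EE θ N (fun s => (s.count i : ℝ)) * EE θ N (fun s => (s.count j : ℝ))| ≤
      12 * |θ - 1| * θ ^ 2 / N * (1 / i + 1 / j) + if i = j then 2 * θ / i else 0 := by
  have hN' : (0 : ℝ) < N := by exact_mod_cast hN
  have hi' : (0 : ℝ) < i := by exact_mod_cast hi
  have hj' : (0 : ℝ) < j := by exact_mod_cast hj
  have hH := HH_pos θ hθ N
  rw [EE_count θ N i hi (by omega), EE_count θ N j hj (by omega), EE,
    SP_count_count θ N i j hi hj (by omega), smul_eq_mul, Nat.sub_sub]
  have r1 := HH_ratio θ hθ N i hN (by omega)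
  have r2 := HH_ratio θ hθ N j hN (by omega)
  have r3 := HH_ratio θ hθ N (i + j) hN (by omega)
  have b1 := HH_ratio_le θ hθ N i hN (by omega)
  have b2 := HH_ratio_le θ hθ N j hN (by omega)
  have p1 : 0 ≤ HH θ (N - i) / HH θ N := div_nonneg (HH_pos θ hθ _).le hH.le
  have p2 : 0 ≤ HH θ (N - j) / HH θ N := div_nonneg (HH_pos θ hθ _).le hH.le
  set C := 4 * |θ - 1| with hC
  have hC0 : 0 ≤ C := by positivity
  have e : (HH θ N)⁻¹ * (θ / i * (θ / j) * HH θ (N - (i + j)) +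
      if i = j then θ / i * HH θ (N - i) else 0) -
      θ / i * (HH θ (N - i) / HH θ N) * (θ / j * (HH θ (N - j) / HH θ N)) =
      θ / i * (θ / j) * (HH θ (N - (i + j)) / HH θ N -
        HH θ (N - i) / HH θ N * (HH θ (N - j) / HH θ N)) +
      if i = j then θ / i * (HH θ (N - i) / HH θ N) else 0 := by
    split_ifs <;> ring
  rw [e]
  generalize HH θ (N - i) / HH θ N = a at *
  generalize HH θ (N - j) / HH θ N = b at *
  generalize HH θ (N - (i + j)) / HH θ N = c at *
  refine (abs_add_le _ _).trans ?_
  have q : |c - a * b| ≤ 3 * C * (i + j) / N := by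
    have e2 : c - a * b = (c - 1) - (a - 1) * b - (b - 1) := by ring
    rw [e2]
    refine (abs_sub _ _).trans ?_
    have := abs_sub (c - 1) ((a - 1) * b)
    have h3 : |(a - 1) * b| ≤ C * i / N * 2 := by
      rw [abs_mul, abs_of_nonneg p2]; gcongr
    have h4 : C * ((i + j : ℕ) : ℝ) / N + C * i / N * 2 + C * j / N ≤ 3 * C * (i + j) / N := by
      push_cast
      rw [← sub_nonneg]
      have : 3 * C * ((i : ℝ) + j) / N - (C * (i + j) / N + C * i / N * 2 + C * j / N) =
        C * j / N := by ring
      rw [this]; positivity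
    linarith
  gcongr ?_ + ?_
  · rw [abs_mul, abs_of_nonneg (by positivity)]
    calc θ / i * (θ / j) * |c - a * b| ≤ θ / i * (θ / j) * (3 * C * (i + j) / N) := by gcongr
      _ = _ := by rw [hC]; field_simp; ring
  · split_ifs
    · rw [abs_mul, abs_of_nonneg p1, abs_of_nonneg (by positivity)]
      calc θ / i * a ≤ θ / i * 2 := by gcongr
        _ = _ := by ring
    · simp

lemma EE_var (θ : ℝ) (hθ : 0 < θ) (N : ℕ) (hN : 1 ≤ N) (u : ℕ → ℝ) (hu : ∀ j, |u j| ≤ 1)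
    (T : Finset ℕ) (hT : T ⊆ Finset.Icc 1 (N / 4)) :
    EE θ N (fun s => (∑ j ∈ T, u j * ((s.count j : ℝ) - EE θ N (fun s => (s.count j : ℝ)))) ^ 2)
      ≤ (24 * |θ - 1| * θ ^ 2 + 2 * θ) * ∑ j ∈ T, (1 : ℝ) / j := by
  have hN' : (0 : ℝ) < N := by exact_mod_cast hN
  set m : ℕ → ℝ := fun j => EE θ N (fun s => (s.count j : ℝ)) with hm
  have h1 : EE θ N (fun s => (∑ j ∈ T, u j * ((s.count j : ℝ) - m j)) ^ 2) =
      ∑ i ∈ T, ∑ j ∈ T, u i * u j *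
        (EE θ N (fun s => (s.count i : ℝ) * (s.count j : ℝ)) - m i * m j) := by
    have e : (fun s : Multiset ℕ => (∑ j ∈ T, u j * ((s.count j : ℝ) - m j)) ^ 2) =
        fun s => ∑ i ∈ T, ∑ j ∈ T, u i * u j *
          (((s.count i : ℝ) * (s.count j : ℝ) - m i * (s.count j : ℝ)) -
            (m j * (s.count i : ℝ) - m i * m j)) := by
      funext s
      rw [sq, Finset.sum_mul_sum]
      refine Finset.sum_congr rfl fun i _ => Finset.sum_congr rfl fun j _ => ?_
      ring
    rw [e, EE_sum]
    refine Finset.sum_congr rfl fun i _ => ?_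
    rw [EE_sum]
    refine Finset.sum_congr rfl fun j _ => ?_
    rw [EE_mul, EE_sub, EE_sub, EE_sub, EE_mul, EE_mul, EE_const θ hθ]
    simp only [hm]
    ring
  have hmem : ∀ i ∈ T, 1 ≤ i ∧ 4 * i ≤ N := by
    intro i hi
    have := Finset.mem_Icc.1 (hT hi)
    omega
  have hcard : (T.card : ℝ) ≤ N := by
    have := Finset.card_le_card hT
    rw [Nat.card_Icc] at this
    have : T.card ≤ N := by omega
    exact_mod_cast this
  calc EE θ N (fun s => (∑ j ∈ T, u j * ((s.count j : ℝ) - m j)) ^ 2)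
      = _ := h1
    _ ≤ ∑ i ∈ T, ∑ j ∈ T, (12 * |θ - 1| * θ ^ 2 / N * (1 / i + 1 / j) +
          if i = j then 2 * θ / i else 0) := by
        refine Finset.sum_le_sum fun i hi => Finset.sum_le_sum fun j hj => ?_
        refine le_trans (le_abs_self _) ?_
        rw [abs_mul, abs_mul]
        have h3 : |u i| * |u j| ≤ 1 :=
          mul_le_one₀ (hu i) (abs_nonneg _) (hu j)
        refine (mul_le_of_le_one_left (abs_nonneg _) h3).trans ?_
        exact EE_cov θ hθ N i j hN (hmem i hi).1 (hmem j hj).1 (hmem i hi).2 (hmem j hj).2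
    _ = 24 * |θ - 1| * θ ^ 2 * (T.card / N) * (∑ j ∈ T, (1 : ℝ) / j) +
          2 * θ * (∑ j ∈ T, (1 : ℝ) / j) := by
        simp only [Finset.sum_add_distrib, ← Finset.mul_sum, Finset.sum_const, nsmul_eq_mul,
          Finset.sum_ite_eq]
        have e3 : ∑ i ∈ T, (if i ∈ T then 2 * θ / (i : ℝ) else 0) =
            2 * θ * ∑ j ∈ T, (1 : ℝ) / j := by
          rw [Finset.mul_sum]
          refine Finset.sum_congr rfl fun i hi => ?_
          rw [if_pos hi]; ring
        rw [e3]; ring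
    _ ≤ 24 * |θ - 1| * θ ^ 2 * 1 * (∑ j ∈ T, (1 : ℝ) / j) +
          2 * θ * (∑ j ∈ T, (1 : ℝ) / j) := by
        have h5 : 0 ≤ ∑ j ∈ T, (1 : ℝ) / j := Finset.sum_nonneg fun j _ => by positivity
        gcongr
        rw [div_le_one hN']; exact hcard
    _ = _ := by ring


lemma sum_Icc_split (f : ℕ → ℝ) (a b c : ℕ) (hab : a ≤ b) (hbc : b ≤ c) :
    ∑ j ∈ Finset.Icc (a + 1) c, f j =
      ∑ j ∈ Finset.Icc (a + 1) b, f j + ∑ j ∈ Finset.Icc (b + 1) c, f j := by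
  have h := Finset.sum_Ioc_consecutive f hab hbc
  have e : ∀ x y : ℕ, Finset.Icc (x + 1) y = Finset.Ioc x y := by
    intro x y; ext z; simp
  rw [e, e, e, h]

lemma sum_inv_le_log (M Q : ℕ) (hM : 1 ≤ M) (hQ : M ≤ Q) :
    ∑ j ∈ Finset.Icc (M + 1) Q, (1 : ℝ) / j ≤ Real.log (Q / M) := by
  have hM' : (0 : ℝ) < M := by exact_mod_cast hM
  induction Q, hQ using Nat.le_induction with
  | base => simp
  | succ n hn ih =>
    have hn' : (0 : ℝ) < n := by
      have : 0 < n := by omega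
      exact_mod_cast this
    rw [← Finset.insert_Icc_right_eq_Icc_add_one (by omega), Finset.sum_insert (by simp)]
    have h1 : (1 : ℝ) / ((n + 1 : ℕ) : ℝ) ≤ Real.log ((n + 1 : ℕ) / n) := by
      have := Real.one_sub_inv_le_log_of_pos (show (0 : ℝ) < ((n + 1 : ℕ) : ℝ) / n by positivity)
      refine le_trans (le_of_eq ?_) this
      push_cast
      field_simp
      ring
    have h2 : Real.log (((n + 1 : ℕ) : ℝ) / M) = Real.log ((n + 1 : ℕ) / n) + Real.log (n / M) := by
      rw [← Real.log_mul (by positivity) (by positivity)]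
      congr 1; field_simp
    rw [h2]
    exact add_le_add h1 ih

lemma sum_inv_le (M : ℕ) : ∑ j ∈ Finset.Icc 1 M, (1 : ℝ) / j ≤ 1 + Real.log M := by
  have h := harmonic_le_one_add_log M
  rw [harmonic_eq_sum_Icc] at h
  push_cast at h
  simpa using h

lemma EE_mul_const (θ : ℝ) (N : ℕ) (F : Multiset ℕ → ℂ) (c : ℂ) :
    EE θ N (fun s => F s * c) = EE θ N F * c := by
  unfold EE SP
  rw [smul_mul_assoc, Finset.sum_mul]
  congr 1
  refine Finset.sum_congr rfl fun p _ => ?_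
  rw [smul_mul_assoc]

lemma norm_exp_I_sub_exp_I (a b : ℝ) :
    ‖Complex.exp (Complex.I * a) - Complex.exp (Complex.I * b)‖ ≤ |a - b| := by
  have e : Complex.exp (Complex.I * a) - Complex.exp (Complex.I * b) =
      Complex.exp (Complex.I * b) * (Complex.exp (Complex.I * ((a - b : ℝ) : ℂ)) - 1) := by
    rw [mul_sub, ← Complex.exp_add, mul_one]
    congr 2
    push_cast; ring
  rw [e, norm_mul, mul_comm Complex.I (b : ℂ), Complex.norm_exp_ofReal_mul_I, one_mul]
  exact norm_exp_I_sub_one _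

lemma char_est (θ : ℝ) (hθ : 0 < θ) (N M : ℕ) (hM : 1 ≤ M) (hMN : 4 * M ≤ N) (s : ℝ)
    (u : ℕ → ℝ) (hu : ∀ j, |u j| ≤ 1) :
    ‖EE θ N (fun t => Complex.exp (Complex.I * ((s * ∑ j ∈ Finset.Icc 1 N,
        u j * ((t.count j : ℝ) - EE θ N (fun s => (s.count j : ℝ))) : ℝ) : ℂ))) -
      Complex.exp (∑ j ∈ Finset.Icc 1 M,
        (θ : ℂ) * (Complex.exp (Complex.I * ((s * u j : ℝ) : ℂ)) - 1
          - Complex.I * ((s * u j : ℝ) : ℂ)) / j)‖ ≤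
      |s| * (√((24 * |θ - 1| * θ ^ 2 + 2 * θ) * Real.log (N / M) + 1) + 8
        + 4 * |θ - 1| * θ * (M / N)) +
      (4 * |θ - 1| * (M / N) + ((1 + 1 / θ) * N + 1) * Real.exp (-(N / (2 * M)))) *
      Real.exp (θ * |s| * Real.exp 1 * (1 + Real.log M)) := by
  have hN : 1 ≤ N := by omega
  have hMr : (0 : ℝ) < M := by exact_mod_cast hM
  have hNr : (0 : ℝ) < N := by exact_mod_cast hN
  set m : ℕ → ℝ := fun j => EE θ N (fun s => (s.count j : ℝ)) with hm
  let v : ℕ → ℂ := fun j =>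
    if j ∈ Finset.Icc 1 M then Complex.exp (Complex.I * ((s * u j : ℝ) : ℂ)) else 1
  set κ : ℝ := ∑ j ∈ Finset.Icc 1 M, u j * (θ / j) with hκ
  set cst : ℂ := Complex.exp (Complex.I * ((-(s * κ) : ℝ) : ℂ)) with hcst
  have hcst1 : ‖cst‖ = 1 := by
    rw [hcst, mul_comm, Complex.norm_exp_ofReal_mul_I]
  -- product formula
  have hprod : ∀ p : N.Partition, (p.parts.map v).prod =
      Complex.exp (Complex.I * ((s * ∑ j ∈ Finset.Icc 1 M, u j * (p.parts.count j : ℝ) : ℝ) : ℂ)) := by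
    intro p
    rw [Finset.prod_multiset_map_count]
    have h1 : ∏ j ∈ p.parts.toFinset, v j ^ p.parts.count j =
        ∏ j ∈ Finset.Icc 1 M, v j ^ p.parts.count j := by
      have h2 : ∏ j ∈ p.parts.toFinset, v j ^ p.parts.count j =
          ∏ j ∈ p.parts.toFinset ∪ Finset.Icc 1 M, v j ^ p.parts.count j := by
        refine Finset.prod_subset Finset.subset_union_left ?_
        intro x _ hx
        have : p.parts.count x = 0 := by
          rw [Multiset.count_eq_zero]; simpa using hx
        rw [this, pow_zero]
      rw [h2]
      symm
      refine Finset.prod_subset Finset.subset_union_right ?_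
      intro x _ hx
      simp only [v, if_neg hx, one_pow]
    rw [h1, Finset.mul_sum]
    push_cast
    rw [Finset.mul_sum, Complex.exp_sum]
    refine Finset.prod_congr rfl fun j hj => ?_
    simp only [v, if_pos hj]
    rw [← Complex.exp_nat_mul]
    congr 1
    push_cast; ring
  -- first difference
  have hmed := EE_abs_le θ hθ N
    (fun t => ∑ j ∈ Finset.Icc (M + 1) (N / 4), u j * ((t.count j : ℝ) - m j))
    ((24 * |θ - 1| * θ ^ 2 + 2 * θ) * Real.log (N / M) + 1) (by
      have : 0 ≤ Real.log ((N : ℝ) / M) := by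
        apply Real.log_nonneg
        rw [one_le_div hMr]
        have : M ≤ N := by omega
        exact_mod_cast this
      positivity) (by
      refine (EE_var θ hθ N hN u hu _ (Finset.Icc_subset_Icc_left (by omega))).trans ?_
      have h1 := sum_inv_le_log M (N / 4) hM (by omega)
      have h2 : Real.log (((N / 4 : ℕ) : ℝ) / M) ≤ Real.log ((N : ℝ) / M) := by
        have h4 : 0 < N / 4 := by omega
        have h4' : (0 : ℝ) < ((N / 4 : ℕ) : ℝ) := by exact_mod_cast h4
        apply Real.log_le_log (by positivity)
        gcongr
        omega
      have h3 : (24 * |θ - 1| * θ ^ 2 + 2 * θ) * ∑ j ∈ Finset.Icc (M + 1) (N / 4), (1 : ℝ) / j ≤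
          (24 * |θ - 1| * θ ^ 2 + 2 * θ) * Real.log ((N : ℝ) / M) := by
        gcongr
        exact h1.trans h2
      linarith)
  have hlarge := EE_large θ hθ N hN
  have hsmall : |κ - ∑ j ∈ Finset.Icc 1 M, u j * m j| ≤ 4 * |θ - 1| * θ * (M / N) := by
    rw [hκ, ← Finset.sum_sub_distrib]
    calc _ ≤ ∑ j ∈ Finset.Icc 1 M, |u j * (θ / j) - u j * m j| := Finset.abs_sum_le_sum_abs _ _
      _ ≤ ∑ j ∈ Finset.Icc 1 M, 4 * |θ - 1| * θ / N := by
        refine Finset.sum_le_sum fun j hj => ?_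
        obtain ⟨h1, h2⟩ := Finset.mem_Icc.1 hj
        have hj' : (0 : ℝ) < j := by exact_mod_cast h1
        have := HH_ratio θ hθ N j hN (by omega)
        simp only [hm]
        rw [EE_count θ N j h1 (by omega)]
        have e : u j * (θ / j) - u j * (θ / j * (HH θ (N - j) / HH θ N)) =
          -(u j * (θ / j) * (HH θ (N - j) / HH θ N - 1)) := by ring
        rw [e, abs_neg, abs_mul, abs_mul, abs_of_nonneg (show 0 ≤ θ / (j : ℝ) by positivity)]
        calc _ ≤ 1 * (θ / j) * (4 * |θ - 1| * j / N) := by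
              gcongr; exact hu j
          _ = _ := by field_simp
      _ = _ := by
        rw [Finset.sum_const, Nat.card_Icc, nsmul_eq_mul]
        simp; ring
  have hdiff : ‖EE θ N (fun t => Complex.exp (Complex.I * ((s * ∑ j ∈ Finset.Icc 1 N,
        u j * ((t.count j : ℝ) - m j) : ℝ) : ℂ))) -
        EE θ N (fun t => (t.map v).prod * cst)‖ ≤
      |s| * (√((24 * |θ - 1| * θ ^ 2 + 2 * θ) * Real.log (N / M) + 1) + 8
        + 4 * |θ - 1| * θ * (M / N)) := by
    rw [← EE_sub]
    refine (EE_norm_le θ hθ N _).trans ?_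
    have hb : EE θ N (fun t => |s| *
          ((|∑ j ∈ Finset.Icc (M + 1) (N / 4), u j * ((t.count j : ℝ) - m j)|
          + (∑ j ∈ Finset.Icc (N / 4 + 1) N, (t.count j : ℝ)
          + ∑ j ∈ Finset.Icc (N / 4 + 1) N, m j)) + 4 * |θ - 1| * θ * (M / N))) ≤
        |s| * (√((24 * |θ - 1| * θ ^ 2 + 2 * θ) * Real.log (N / M) + 1) + 8
        + 4 * |θ - 1| * θ * (M / N)) := by
      rw [EE_mul, EE_add, EE_add, EE_add, EE_const θ hθ, EE_const θ hθ, EE_sum]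
      gcongr
      simp only [hm]
      linarith
    refine le_trans (EE_mono θ hθ N _ _ fun p => ?_) hb
    rw [hprod p, hcst, ← Complex.exp_add, ← mul_add, ← Complex.ofReal_add]
    refine (norm_exp_I_sub_exp_I _ _).trans ?_
    have hspl := sum_Icc_split (fun j => u j * ((p.parts.count j : ℝ) - m j)) 0 M N
      (by omega) (by omega)
    rw [sum_Icc_split _ M (N / 4) N (by omega) (by omega)] at hspl
    simp only [zero_add] at hspl
    rw [hspl]
    have e : s * (∑ j ∈ Finset.Icc 1 M, u j * ((p.parts.count j : ℝ) - m j) +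
        (∑ j ∈ Finset.Icc (M + 1) (N / 4), u j * ((p.parts.count j : ℝ) - m j) +
          ∑ j ∈ Finset.Icc (N / 4 + 1) N, u j * ((p.parts.count j : ℝ) - m j))) -
        (s * ∑ j ∈ Finset.Icc 1 M, u j * (p.parts.count j : ℝ) + -(s * κ)) =
        s * ((∑ j ∈ Finset.Icc (M + 1) (N / 4), u j * ((p.parts.count j : ℝ) - m j) +
          ∑ j ∈ Finset.Icc (N / 4 + 1) N, u j * ((p.parts.count j : ℝ) - m j)) +
          (κ - ∑ j ∈ Finset.Icc 1 M, u j * m j)) := by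
      have : ∑ j ∈ Finset.Icc 1 M, u j * ((p.parts.count j : ℝ) - m j) =
        ∑ j ∈ Finset.Icc 1 M, u j * (p.parts.count j : ℝ) - ∑ j ∈ Finset.Icc 1 M, u j * m j := by
        rw [← Finset.sum_sub_distrib]
        exact Finset.sum_congr rfl fun j _ => by ring
      rw [this]; ring
    rw [e, abs_mul]
    gcongr
    refine (abs_add_le _ _).trans (add_le_add ((abs_add_le _ _).trans ?_) hsmall)
    gcongr
    refine (Finset.abs_sum_le_sum_abs _ _).trans ?_
    rw [← Finset.sum_add_distrib]
    refine Finset.sum_le_sum fun j _ => ?_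
    rw [abs_mul]
    refine (mul_le_of_le_one_left (abs_nonneg _) (hu j)).trans ?_
    have h1 : 0 ≤ m j := EE_count_nonneg θ hθ N j
    have h2 : (0 : ℝ) ≤ p.parts.count j := by positivity
    rw [abs_le]; constructor <;> linarith
  have hmain := main_est θ hθ N M hN hM s u hu v (fun j => rfl)
  have hmain2 : ‖EE θ N (fun t => (t.map v).prod * cst) -
      Complex.exp (∑ j ∈ Finset.Icc 1 M,
        (θ : ℂ) * (Complex.exp (Complex.I * ((s * u j : ℝ) : ℂ)) - 1
          - Complex.I * ((s * u j : ℝ) : ℂ)) / j)‖ ≤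
      (4 * |θ - 1| * (M / N) + ((1 + 1 / θ) * N + 1) * Real.exp (-(N / (2 * M)))) *
      Real.exp (θ * |s| * Real.exp 1 * (1 + Real.log M)) := by
    have e : Complex.exp (∑ j ∈ Finset.Icc 1 M,
        (θ : ℂ) * (Complex.exp (Complex.I * ((s * u j : ℝ) : ℂ)) - 1
          - Complex.I * ((s * u j : ℝ) : ℂ)) / j) =
        Complex.exp (∑ j ∈ Finset.Icc 1 M,
        (θ : ℂ) * (Complex.exp (Complex.I * ((s * u j : ℝ) : ℂ)) - 1) / j) * cst := by
      rw [hcst, ← Complex.exp_add]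
      congr 1
      rw [hκ]
      push_cast
      rw [Finset.mul_sum, ← Finset.sum_neg_distrib, Finset.mul_sum, ← Finset.sum_add_distrib]
      refine Finset.sum_congr rfl fun j _ => ?_
      ring
    rw [e, EE_mul_const, ← sub_mul, norm_mul, hcst1, mul_one, EE]
    refine hmain.trans ?_
    gcongr
    exact sum_inv_le M
  calc _ ≤ _ := norm_sub_le_norm_sub_add_norm_sub _ (EE θ N (fun t => (t.map v).prod * cst)) _
    _ ≤ _ := add_le_add hdiff hmain2


lemma harm_tendsto : Tendsto (fun n : ℕ => (∑ k ∈ Finset.range n, (1 : ℝ) / (k + 1)) / Real.log n)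
    atTop (nhds 1) := by
  have hlog : Tendsto (fun n : ℕ => Real.log n) atTop atTop :=
    Real.tendsto_log_atTop.comp tendsto_natCast_atTop_atTop
  have e : ∀ n : ℕ, ∑ k ∈ Finset.range n, (1 : ℝ) / (k + 1) = (harmonic n : ℝ) := by
    intro n; unfold harmonic; push_cast; simp
  have h1 : Tendsto (fun n : ℕ => 1 / Real.log n + 1) atTop (nhds 1) := by
    have := (tendsto_const_nhds (x := (1 : ℝ))).div_atTop hlog
    simpa using this.add_const 1
  refine tendsto_of_tendsto_of_tendsto_of_le_of_le' tendsto_const_nhds h1 ?_ ?_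
  · filter_upwards [hlog.eventually_gt_atTop 0, eventually_gt_atTop 0] with n hn hn0
    rw [e, le_div_iff₀ hn, one_mul]
    refine le_trans ?_ (log_add_one_le_harmonic n)
    apply Real.log_le_log
    · exact_mod_cast hn0
    · push_cast; linarith
  · filter_upwards [hlog.eventually_gt_atTop 0] with n hn
    rw [e, div_le_iff₀ hn, add_mul, one_mul, div_mul_cancel₀ _ hn.ne']
    exact harmonic_le_one_add_log n

lemma log_mean (a : ℕ → ℝ) (c : ℝ)
    (h : Tendsto (fun N : ℕ => (1 / (N : ℝ)) * ∑ j ∈ Finset.Icc 1 N, a j) atTop (nhds c)) :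
    Tendsto (fun N : ℕ => (∑ j ∈ Finset.Icc 1 N, a j / j) / Real.log N) atTop (nhds c) := by
  have hlog : Tendsto (fun n : ℕ => Real.log n) atTop atTop :=
    Real.tendsto_log_atTop.comp tendsto_natCast_atTop_atTop
  set b : ℕ → ℝ := fun N => (1 / (N : ℝ)) * ∑ j ∈ Finset.Icc 1 N, a j with hb
  have hS : ∀ n : ℕ, (n : ℝ) * b n = ∑ j ∈ Finset.Icc 1 n, a j := by
    intro n
    rcases Nat.eq_zero_or_pos n with rfl | hn
    · simp
    · have : (n : ℝ) ≠ 0 := by exact_mod_cast hn.ne'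
      simp only [hb]; field_simp
  have habel : ∀ n : ℕ, ∑ j ∈ Finset.Icc 1 n, a j / j =
      b n + ∑ k ∈ Finset.range n, b k * (1 / ((k : ℝ) + 1)) := by
    intro n
    induction n with
    | zero => simp [hb]
    | succ n ih =>
      have hi : Finset.Icc 1 (n + 1) = insert (n + 1) (Finset.Icc 1 n) := by
        rw [Finset.insert_Icc_right_eq_Icc_add_one (by omega)]
      have h1 := hS (n + 1)
      rw [hi, Finset.sum_insert (by simp), ← hS n] at h1
      rw [hi, Finset.sum_insert (by simp), ih, Finset.sum_range_succ]
      have : ((n : ℝ) + 1) ≠ 0 := by positivity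
      push_cast at h1 ⊢
      field_simp
      linarith
  set g : ℕ → ℝ := fun k => 1 / ((k : ℝ) + 1) with hg
  have ho : (fun k => (b k - c) * g k) =o[atTop] g := by
    have h0 : Tendsto (fun k => b k - c) atTop (nhds 0) := by
      simpa using h.sub_const c
    have h1 : (fun k => b k - c) =o[atTop] (fun _ => (1 : ℝ)) :=
      (Asymptotics.isLittleO_one_iff ℝ).2 h0
    simpa using h1.mul_isBigO (Asymptotics.isBigO_refl g atTop)
  have hsumtop : Tendsto (fun n => ∑ k ∈ Finset.range n, g k) atTop atTop := by
    simpa [hg] using Real.tendsto_sum_range_one_div_nat_succ_atTop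
  have hsum := ho.sum_range (fun n => by simp only [hg]; positivity) hsumtop
  have hr := hsum.tendsto_div_nhds_zero
  have hfin : Tendsto (fun n : ℕ => b n / Real.log n +
      ((∑ k ∈ Finset.range n, (b k - c) * g k) / (∑ k ∈ Finset.range n, g k) + c) *
      ((∑ k ∈ Finset.range n, g k) / Real.log n)) atTop (nhds (0 + (0 + c) * 1)) :=
    (h.div_atTop hlog).add ((hr.add_const c).mul harm_tendsto)
  rw [zero_add, zero_add, mul_one] at hfin
  refine hfin.congr' ?_
  filter_upwards [hsumtop.eventually_gt_atTop 0, hlog.eventually_gt_atTop 0] with n hn hl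
  rw [habel]
  have e : ∑ k ∈ Finset.range n, (b k - c) * g k =
      ∑ k ∈ Finset.range n, b k * g k - c * ∑ k ∈ Finset.range n, g k := by
    rw [Finset.mul_sum, ← Finset.sum_sub_distrib]
    exact Finset.sum_congr rfl fun k _ => by ring
  rw [e]
  change _ = (b n + ∑ k ∈ Finset.range n, b k * g k) / Real.log n
  field_simp
  ring

lemma exp_I_taylor (y : ℝ) (hy : |y| ≤ 1) :
    ‖Complex.exp (Complex.I * y) - 1 - Complex.I * y + (y : ℂ) ^ 2 / 2‖ ≤ |y| ^ 3 := by
  have hn : ‖Complex.I * (y : ℂ)‖ = |y| := by simp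
  have h := Complex.exp_bound (x := Complex.I * y) (by rw [hn]; exact hy) (n := 3) (by norm_num)
  rw [hn] at h
  simp only [Finset.sum_range_succ, Finset.sum_range_zero] at h
  norm_num [Nat.factorial] at h
  have e : Complex.exp (Complex.I * y) - 1 - Complex.I * y + (y : ℂ) ^ 2 / 2 =
    Complex.exp (Complex.I * y) - (1 + Complex.I * y + (Complex.I * y) ^ 2 / 2) := by
    rw [mul_pow, Complex.I_sq]; ring
  rw [e]
  refine h.trans ?_
  have := pow_nonneg (abs_nonneg y) 3
  nlinarith

lemma exponent_lim (θ : ℝ) (hθ : 0 < θ) (u : ℕ → ℝ) (hu : ∀ j, |u j| ≤ 1) (s : ℕ → ℝ) (M : ℕ → ℕ)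
    (q : ℝ) (hs : Tendsto s atTop (nhds 0))
    (h2 : Tendsto (fun N => s N ^ 2 * ∑ j ∈ Finset.Icc 1 (M N), u j ^ 2 / j) atTop (nhds q))
    (h3 : Tendsto (fun N => |s N| ^ 3 * (1 + Real.log (M N))) atTop (nhds 0)) :
    Tendsto (fun N => ∑ j ∈ Finset.Icc 1 (M N),
        (θ : ℂ) * (Complex.exp (Complex.I * ((s N * u j : ℝ) : ℂ)) - 1
          - Complex.I * ((s N * u j : ℝ) : ℂ)) / j) atTop (nhds ((-(θ * q / 2) : ℝ) : ℂ)) := by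
  have hm : Tendsto (fun N => ((-(θ * (s N ^ 2 * ∑ j ∈ Finset.Icc 1 (M N), u j ^ 2 / j) / 2) : ℝ) : ℂ))
      atTop (nhds ((-(θ * q / 2) : ℝ) : ℂ)) := by
    refine (Complex.continuous_ofReal.tendsto _).comp ?_
    exact ((h2.const_mul θ).div_const 2).neg
  have hd : Tendsto (fun N => ∑ j ∈ Finset.Icc 1 (M N),
        (θ : ℂ) * (Complex.exp (Complex.I * ((s N * u j : ℝ) : ℂ)) - 1
          - Complex.I * ((s N * u j : ℝ) : ℂ)) / j -
        ((-(θ * (s N ^ 2 * ∑ j ∈ Finset.Icc 1 (M N), u j ^ 2 / j) / 2) : ℝ) : ℂ)) atTop (nhds 0) := by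
    rw [tendsto_zero_iff_norm_tendsto_zero]
    have h3' := h3.const_mul θ
    rw [mul_zero] at h3'
    have hs1 : ∀ᶠ N in atTop, |s N| < 1 := by
      have := hs.abs
      rw [abs_zero] at this
      exact this.eventually_lt_const one_pos
    refine squeeze_zero' (Eventually.of_forall fun N => norm_nonneg _) ?_ h3'
    filter_upwards [hs1] with N hN
    have e : ∑ j ∈ Finset.Icc 1 (M N),
        (θ : ℂ) * (Complex.exp (Complex.I * ((s N * u j : ℝ) : ℂ)) - 1
          - Complex.I * ((s N * u j : ℝ) : ℂ)) / j -
        ((-(θ * (s N ^ 2 * ∑ j ∈ Finset.Icc 1 (M N), u j ^ 2 / j) / 2) : ℝ) : ℂ) =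
        ∑ j ∈ Finset.Icc 1 (M N),
        (θ : ℂ) * (Complex.exp (Complex.I * ((s N * u j : ℝ) : ℂ)) - 1
          - Complex.I * ((s N * u j : ℝ) : ℂ) + ((s N * u j : ℝ) : ℂ) ^ 2 / 2) / j := by
      push_cast
      rw [sub_neg_eq_add, Finset.mul_sum, Finset.mul_sum, Finset.sum_div, ← Finset.sum_add_distrib]
      refine Finset.sum_congr rfl fun j _ => ?_
      ring
    rw [e]
    calc _ ≤ ∑ j ∈ Finset.Icc 1 (M N), θ * |s N| ^ 3 * (1 / j) := by
          refine (norm_sum_le _ _).trans (Finset.sum_le_sum fun j _ => ?_)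
          have hle : |s N * u j| ≤ |s N| := by
            rw [abs_mul]; exact mul_le_of_le_one_right (abs_nonneg _) (hu j)
          have ht := exp_I_taylor (s N * u j) (hle.trans hN.le)
          rw [norm_div, norm_mul, Complex.norm_real, Real.norm_of_nonneg hθ.le,
            Complex.norm_natCast, mul_one_div]
          gcongr
          refine ht.trans ?_
          gcongr
      _ ≤ _ := by
          rw [← Finset.mul_sum, mul_assoc]
          gcongr
          exact sum_inv_le _
  have := hd.add hm
  simpa using this

lemma c2_pos (α β : ℝ) (hαβ : α < β) (hβ : β < α + 1) (c₂ : ℝ)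
    (hc₂ : Tendsto
      (fun N : ℕ =>
        (1 / (N : ℝ)) *
          ∑ j ∈ Finset.Icc 1 N,
            (Int.fract ((j : ℝ) * β) - Int.fract ((j : ℝ) * α)) ^ 2)
      atTop (nhds c₂)) : 0 < c₂ := by
  set d : ℕ → ℝ := fun j => Int.fract ((j : ℝ) * β) - Int.fract ((j : ℝ) * α) with hd
  set δ := min (β - α) (1 - (β - α)) with hδ
  have hδ0 : 0 < δ := lt_min (by linarith) (by linarith)
  have hstep : ∀ j, δ ^ 2 / 2 ≤ d j ^ 2 + d (j + 1) ^ 2 := by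
    intro j
    have h1 : δ ≤ |d (j + 1) - d j| := by
      have e : ∃ k : ℤ, d (j + 1) - d j = (β - α) + k := by
        refine ⟨-⌊((j + 1 : ℕ) : ℝ) * β⌋ + ⌊((j + 1 : ℕ) : ℝ) * α⌋ + ⌊(j : ℝ) * β⌋ - ⌊(j : ℝ) * α⌋, ?_⟩
        simp only [hd, Int.fract]
        push_cast
        ring
      obtain ⟨k, hk⟩ := e
      rw [hk]
      rcases le_or_gt 0 k with h | h
      · have : (0 : ℝ) ≤ k := by exact_mod_cast h
        refine le_trans (min_le_left _ _) (le_trans ?_ (le_abs_self _))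
        linarith
      · have : (k : ℝ) ≤ -1 := by
          have : k ≤ -1 := by omega
          exact_mod_cast this
        refine le_trans (min_le_right _ _) (le_trans ?_ (neg_le_abs _))
        linarith
    have h2 : δ ^ 2 ≤ (d (j + 1) - d j) ^ 2 := by
      rw [← sq_abs (d (j + 1) - d j)]
      gcongr
    nlinarith [sq_nonneg (d (j + 1) + d j)]
  have hsum : ∀ n : ℕ, n * (δ ^ 2 / 2) ≤ ∑ j ∈ Finset.Icc 1 (2 * n), d j ^ 2 := by
    intro n
    induction n with
    | zero => simp
    | succ n ih =>
      have e : 2 * (n + 1) = 2 * n + 1 + 1 := by ring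
      rw [e, ← Finset.insert_Icc_right_eq_Icc_add_one (by omega), Finset.sum_insert (by simp),
        ← Finset.insert_Icc_right_eq_Icc_add_one (by omega), Finset.sum_insert (by simp)]
      have := hstep (2 * n + 1)
      push_cast
      linarith
  have h2n : Tendsto (fun n : ℕ => 2 * n) atTop atTop :=
    tendsto_id.const_mul_atTop' (by norm_num)
  have hc := hc₂.comp h2n
  have : δ ^ 2 / 4 ≤ c₂ := by
    refine ge_of_tendsto hc ?_
    filter_upwards [eventually_gt_atTop 0] with n hn
    have hn' : (0 : ℝ) < n := by exact_mod_cast hn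
    simp only [Function.comp]
    have := hsum n
    push_cast
    rw [div_mul_eq_mul_div, one_mul, le_div_iff₀ (by positivity)]
    linarith
  have : 0 < δ ^ 2 / 4 := by positivity
  linarith


lemma XNI_center (θ : ℝ) (hθ : 0 < θ) (N : ℕ) (α β : ℝ) (p : N.Partition) :
    (∑ j ∈ Finset.Icc 1 N, (p.parts.count j : ℝ) * ((⌊(j : ℝ) * β⌋ : ℝ) - (⌊(j : ℝ) * α⌋ : ℝ)))
      - ewensMean θ N α β =
    -(∑ j ∈ Finset.Icc 1 N, (Int.fract ((j : ℝ) * β) - Int.fract ((j : ℝ) * α)) *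
      ((p.parts.count j : ℝ) - EE θ N (fun s => (s.count j : ℝ)))) := by
  set g : Multiset ℕ → ℝ := fun s =>
    ∑ j ∈ Finset.Icc 1 N, (s.count j : ℝ) * ((⌊(j : ℝ) * β⌋ : ℝ) - (⌊(j : ℝ) * α⌋ : ℝ)) with hg
  set u : ℕ → ℝ := fun j => Int.fract ((j : ℝ) * β) - Int.fract ((j : ℝ) * α) with hu
  have h1 : ∀ q : N.Partition, g q.parts =
      N * (β - α) - ∑ j ∈ Finset.Icc 1 N, u j * (q.parts.count j : ℝ) := by
    intro q
    have h2 : (N : ℝ) = ∑ j ∈ Finset.Icc 1 N, (j : ℝ) * (q.parts.count j : ℝ) := by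
      exact_mod_cast (parts_sum_count q).symm
    conv_rhs => rw [h2]
    rw [Finset.sum_mul, ← Finset.sum_sub_distrib]
    simp only [hg]
    refine Finset.sum_congr rfl fun j _ => ?_
    simp only [hu, Int.fract]
    ring
  have h3 : ewensMean θ N α β = EE θ N g := by
    unfold ewensMean EE
    rw [← ewens_sum]
    refine Finset.sum_congr rfl fun σ _ => ?_
    simp only [hg, XNI, pp_count, smul_eq_mul]
  have h4 : EE θ N g = N * (β - α) - ∑ j ∈ Finset.Icc 1 N, u j * EE θ N (fun s => (s.count j : ℝ)) := by
    rw [EE_congr θ N g (fun s => N * (β - α) - ∑ j ∈ Finset.Icc 1 N, u j * (s.count j : ℝ)) h1,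
      EE_sub, EE_const θ hθ, EE_sum]
    congr 1
    exact Finset.sum_congr rfl fun j _ => EE_mul θ N (u j) _
  change g p.parts - _ = _
  rw [h3, h4, h1]
  simp only [mul_sub, Finset.sum_sub_distrib]
  ring

lemma charsum_eq (θ : ℝ) (hθ : 0 < θ) (N : ℕ) (α β t : ℝ) :
    ∑ σ : Equiv.Perm (Fin N), ewens θ N σ •
      Complex.exp (Complex.I * ((t * (XNI N α β σ - ewensMean θ N α β) : ℝ) : ℂ)) =
    EE θ N (fun s => Complex.exp (Complex.I * ((-t * ∑ j ∈ Finset.Icc 1 N,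
        (Int.fract ((j : ℝ) * β) - Int.fract ((j : ℝ) * α)) *
          ((s.count j : ℝ) - EE θ N (fun s => (s.count j : ℝ))) : ℝ) : ℂ))) := by
  have := ewens_sum θ N (fun s : Multiset ℕ => Complex.exp (Complex.I * ((t *
    ((∑ j ∈ Finset.Icc 1 N, (s.count j : ℝ) * ((⌊(j : ℝ) * β⌋ : ℝ) - (⌊(j : ℝ) * α⌋ : ℝ)))
      - ewensMean θ N α β) : ℝ) : ℂ)))
  simp only [pp_count] at this
  refine this.trans ?_
  refine EE_congr θ N _ _ fun p => ?_
  rw [XNI_center θ hθ, mul_neg, neg_mul]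

lemma ewens_nonneg (θ : ℝ) (hθ : 0 < θ) (N : ℕ) (σ : Equiv.Perm (Fin N)) : 0 ≤ ewens θ N σ := by
  unfold ewens
  exact div_nonneg (by positivity) (Finset.prod_nonneg fun i _ => by positivity)

lemma ewens_total (θ : ℝ) (hθ : 0 < θ) (N : ℕ) : ∑ σ : Equiv.Perm (Fin N), ewens θ N σ = 1 := by
  have h := ewens_sum θ N (fun _ => (1 : ℝ))
  have h2 := EE_const θ hθ N 1
  unfold EE at h2
  rw [h2] at h
  simpa using h

noncomputable def lawM (θ : ℝ) (N : ℕ) (Y : Equiv.Perm (Fin N) → ℝ) : Measure ℝ :=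
  ∑ σ : Equiv.Perm (Fin N), ENNReal.ofReal (ewens θ N σ) • Measure.dirac (Y σ)

lemma lawM_prob (θ : ℝ) (hθ : 0 < θ) (N : ℕ) (Y : Equiv.Perm (Fin N) → ℝ) :
    IsProbabilityMeasure (lawM θ N Y) := by
  constructor
  simp only [lawM, Measure.coe_finsetSum, Finset.sum_apply, Measure.smul_apply, measure_univ,
    smul_eq_mul, mul_one]
  rw [← ENNReal.ofReal_sum_of_nonneg (fun σ _ => ewens_nonneg θ hθ N σ), ewens_total θ hθ,
    ENNReal.ofReal_one]

lemma lawM_integral {E : Type*} [NormedAddCommGroup E] [NormedSpace ℝ E] [CompleteSpace E]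
    (θ : ℝ) (hθ : 0 < θ) (N : ℕ) (Y : Equiv.Perm (Fin N) → ℝ)
    (f : ℝ → E) : ∫ x, f x ∂(lawM θ N Y) = ∑ σ, ewens θ N σ • f (Y σ) := by
  unfold lawM
  rw [integral_finsetSum_measure]
  · refine Finset.sum_congr rfl fun σ _ => ?_
    rw [integral_smul_measure, integral_dirac, ENNReal.toReal_ofReal (ewens_nonneg θ hθ N σ)]
  · intro σ _
    exact (integrable_dirac (by simp)).smul_measure ENNReal.ofReal_ne_top

lemma conclude (θ : ℝ) (hθ : 0 < θ) (Y : ∀ N : ℕ, Equiv.Perm (Fin N) → ℝ)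
    (h : ∀ t : ℝ, Tendsto (fun N : ℕ => ∑ σ : Equiv.Perm (Fin N), ewens θ N σ •
      Complex.exp (Complex.I * ((t * Y N σ : ℝ) : ℂ))) atTop (nhds (Complex.exp ((-(t ^ 2 / 2) : ℝ) : ℂ))))
    (f : ℝ → ℝ) (hf : Continuous f) (hb : ∃ C : ℝ, ∀ x : ℝ, |f x| ≤ C) :
    Tendsto (fun N : ℕ => ∑ σ : Equiv.Perm (Fin N), ewens θ N σ * f (Y N σ)) atTop
      (nhds (∫ x, f x ∂(ProbabilityTheory.gaussianReal 0 1))) := by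
  obtain ⟨C, hC⟩ := hb
  let μ : ℕ → ProbabilityMeasure ℝ := fun N => ⟨lawM θ N (Y N), lawM_prob θ hθ N (Y N)⟩
  let ν : ProbabilityMeasure ℝ := ⟨ProbabilityTheory.gaussianReal 0 1, inferInstance⟩
  have hμ : Tendsto μ atTop (nhds ν) := by
    apply ProbabilityMeasure.tendsto_of_tendsto_charFun
    intro t
    have e1 : charFun (ν : Measure ℝ) t = Complex.exp ((-(t ^ 2 / 2) : ℝ) : ℂ) := by
      change charFun (ProbabilityTheory.gaussianReal 0 1) t = _
      rw [ProbabilityTheory.charFun_gaussianReal]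
      congr 1
      push_cast
      simp
    rw [e1]
    refine (h t).congr fun N => ?_
    change _ = charFun (lawM θ N (Y N)) t
    rw [charFun_apply_real, lawM_integral θ hθ]
    refine Finset.sum_congr rfl fun σ _ => ?_
    congr 2
    push_cast
    ring
  have := (ProbabilityMeasure.tendsto_iff_forall_integral_tendsto.1 hμ)
    (BoundedContinuousFunction.ofNormedAddCommGroup f hf C hC)
  refine this.congr fun N => ?_
  exact lawM_integral θ hθ N (Y N) f


lemma params (x : ℝ) (hx : 2 ≤ x) (N : ℕ) (hN : (N : ℝ) = Real.exp (x ^ 4)) (M : ℕ)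
    (hM : M = ⌊Real.exp (x ^ 4 - x ^ 3)⌋₊) :
    1 ≤ M ∧ 4 * M ≤ N ∧ (M : ℝ) / N ≤ Real.exp (-x ^ 3) ∧ Real.log ((N : ℝ) / M) ≤ x ^ 3 + 1 ∧
    Real.log M ≤ x ^ 4 ∧ x ^ 4 - x ^ 3 - 1 ≤ Real.log M ∧ x ^ 6 / 4 ≤ (N : ℝ) / (2 * M) := by
  have hx3 : (8 : ℝ) ≤ x ^ 3 := by
    have := pow_le_pow_left₀ (by norm_num) hx 3
    norm_num at this; exact this
  have hy : 0 ≤ x ^ 4 - x ^ 3 := by nlinarith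
  have hy1 : 1 ≤ Real.exp (x ^ 4 - x ^ 3) := Real.one_le_exp hy
  have hM1 : 1 ≤ M := by
    rw [hM]; exact Nat.le_floor (by simpa using hy1)
  have hM1' : (1 : ℝ) ≤ M := by exact_mod_cast hM1
  have hM0 : (0 : ℝ) < M := by linarith
  have hle : (M : ℝ) ≤ Real.exp (x ^ 4 - x ^ 3) := by
    rw [hM]; exact Nat.floor_le (by positivity)
  have hge : Real.exp (x ^ 4 - x ^ 3) ≤ 2 * M := by
    have := Nat.lt_floor_add_one (Real.exp (x ^ 4 - x ^ 3))
    rw [← hM] at this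
    linarith
  have hN0 : (0 : ℝ) < N := by rw [hN]; positivity
  have hsplit : Real.exp (x ^ 4 - x ^ 3) = N * Real.exp (-x ^ 3) := by
    rw [hN, ← Real.exp_add]; congr 1
  have hr : (M : ℝ) / N ≤ Real.exp (-x ^ 3) := by
    rw [div_le_iff₀ hN0]; linarith
  have h2e : (2 : ℝ) ≤ Real.exp 1 := by
    have := Real.add_one_le_exp (1 : ℝ); linarith
  have hlogM : Real.log M ≤ x ^ 4 - x ^ 3 := by
    rw [Real.log_le_iff_le_exp hM0]; exact hle
  have hlogM2 : x ^ 4 - x ^ 3 - 1 ≤ Real.log M := by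
    rw [Real.le_log_iff_exp_le hM0, Real.exp_sub, div_le_iff₀ (Real.exp_pos 1)]
    nlinarith
  have hE : Real.exp (x ^ 3) * Real.exp (-x ^ 3) = 1 := by rw [← Real.exp_add]; simp
  have hE0 := Real.exp_pos (x ^ 3)
  have hE1 : x ^ 6 / 2 ≤ Real.exp (x ^ 3) := by
    have := Real.quadratic_le_exp_of_nonneg (x := x ^ 3) (by positivity)
    nlinarith
  have hNM : M * Real.exp (x ^ 3) ≤ N := by
    calc M * Real.exp (x ^ 3) ≤ (N * Real.exp (-x ^ 3)) * Real.exp (x ^ 3) := by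
          rw [← hsplit]; gcongr
      _ = N := by rw [mul_assoc, mul_comm (Real.exp _), hE, mul_one]
  refine ⟨hM1, ?_, hr, ?_, ?_, hlogM2, ?_⟩
  · have h4 : (4 : ℝ) ≤ Real.exp (x ^ 3) := by
      have := Real.add_one_le_exp (x ^ 3); linarith
    have : (4 : ℝ) * M ≤ N := by nlinarith
    exact_mod_cast this
  · rw [Real.log_div hN0.ne' hM0.ne', hN, Real.log_exp]; linarith
  · linarith
  · rw [le_div_iff₀ (by positivity)]
    nlinarith

lemma err_bound (θ : ℝ) (hθ : 0 < θ) (T : ℝ) (hT : 0 ≤ T) (x : ℝ) (hx : 2 ≤ x) (N : ℕ)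
    (hN : (N : ℝ) = Real.exp (x ^ 4)) (M : ℕ) (hM : M = ⌊Real.exp (x ^ 4 - x ^ 3)⌋₊) :
    T / x ^ 2 * (√((24 * |θ - 1| * θ ^ 2 + 2 * θ) * Real.log (N / M) + 1) + 8
        + 4 * |θ - 1| * θ * (M / N)) +
      (4 * |θ - 1| * (M / N) + ((1 + 1 / θ) * N + 1) * Real.exp (-(N / (2 * M)))) *
      Real.exp (θ * (T / x ^ 2) * Real.exp 1 * (1 + Real.log M)) ≤
    T * √(((24 * |θ - 1| * θ ^ 2 + 2 * θ) * (x ^ 3 + 1) + 1) / x ^ 4) +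
      T * (8 + 4 * |θ - 1| * θ) / x ^ 2 +
      4 * |θ - 1| * Real.exp (2 * θ * T * Real.exp 1 * x ^ 2 - x ^ 3) +
      (2 + 1 / θ) * Real.exp (2 * θ * T * Real.exp 1 * x ^ 2 + x ^ 4 - x ^ 6 / 4) := by
  obtain ⟨h1, h2, h3, h4, h5, h6, h7⟩ := params x hx N hN M hM
  have hx0 : 0 < x := by linarith
  have hM0 : (1 : ℝ) ≤ M := by exact_mod_cast h1
  have hN0 : (1 : ℝ) ≤ N := by rw [hN]; exact Real.one_le_exp (by positivity)
  have hr1 : (M : ℝ) / N ≤ 1 := h3.trans (Real.exp_le_one_iff.2 (by have := pow_pos hx0 3; linarith))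
  have hx4 : 1 ≤ x ^ 4 := one_le_pow₀ (by linarith)
  have hsq : √(((24 * |θ - 1| * θ ^ 2 + 2 * θ) * (x ^ 3 + 1) + 1) / x ^ 4) =
      √((24 * |θ - 1| * θ ^ 2 + 2 * θ) * (x ^ 3 + 1) + 1) / x ^ 2 := by
    rw [Real.sqrt_div (by positivity), show x ^ 4 = (x ^ 2) ^ 2 by ring,
      Real.sqrt_sq (by positivity)]
  have hA : T / x ^ 2 * (√((24 * |θ - 1| * θ ^ 2 + 2 * θ) * Real.log (N / M) + 1) + 8
        + 4 * |θ - 1| * θ * (M / N)) ≤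
      T * √(((24 * |θ - 1| * θ ^ 2 + 2 * θ) * (x ^ 3 + 1) + 1) / x ^ 4) +
      T * (8 + 4 * |θ - 1| * θ) / x ^ 2 := by
    rw [hsq]
    calc _ ≤ T / x ^ 2 * (√((24 * |θ - 1| * θ ^ 2 + 2 * θ) * (x ^ 3 + 1) + 1) + 8
        + 4 * |θ - 1| * θ * 1) := by gcongr
      _ = _ := by ring
  have hK : Real.exp (θ * (T / x ^ 2) * Real.exp 1 * (1 + Real.log M)) ≤
      Real.exp (2 * θ * T * Real.exp 1 * x ^ 2) := by
    apply Real.exp_le_exp.2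
    calc _ ≤ θ * (T / x ^ 2) * Real.exp 1 * (2 * x ^ 4) := by
          gcongr; linarith
      _ = _ := by field_simp
  have hB : (4 * |θ - 1| * (M / N) + ((1 + 1 / θ) * N + 1) * Real.exp (-(N / (2 * M)))) *
      Real.exp (θ * (T / x ^ 2) * Real.exp 1 * (1 + Real.log M)) ≤
      (4 * |θ - 1| * Real.exp (-x ^ 3) + ((2 + 1 / θ) * Real.exp (x ^ 4)) * Real.exp (-(x ^ 6 / 4))) *
      Real.exp (2 * θ * T * Real.exp 1 * x ^ 2) := by
    have : (1 + 1 / θ) * N + 1 ≤ (2 + 1 / θ) * Real.exp (x ^ 4) := by rw [← hN]; linarith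
    gcongr
  have e1 : Real.exp (2 * θ * T * Real.exp 1 * x ^ 2 - x ^ 3) =
    Real.exp (2 * θ * T * Real.exp 1 * x ^ 2) * Real.exp (-x ^ 3) := by
    rw [← Real.exp_add]; congr 1
  have e2 : Real.exp (2 * θ * T * Real.exp 1 * x ^ 2 + x ^ 4 - x ^ 6 / 4) =
    Real.exp (2 * θ * T * Real.exp 1 * x ^ 2) * Real.exp (x ^ 4) * Real.exp (-(x ^ 6 / 4)) := by
    rw [← Real.exp_add, ← Real.exp_add]; congr 1
  rw [e1, e2]
  linarith

lemma tendsto_inv_pow (k : ℕ) (hk : k ≠ 0) : Tendsto (fun x : ℝ => 1 / x ^ k) atTop (nhds 0) := by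
  simp only [one_div]
  exact (tendsto_pow_atTop hk).inv_tendsto_atTop (𝕜 := ℝ)

lemma bound_lim (K T A B D H : ℝ) :
    Tendsto (fun x : ℝ => T * √((K * (x ^ 3 + 1) + 1) / x ^ 4) + T * A / x ^ 2 +
      B * Real.exp (H * x ^ 2 - x ^ 3) + D * Real.exp (H * x ^ 2 + x ^ 4 - x ^ 6 / 4))
      atTop (nhds 0) := by
  have h1 : Tendsto (fun x : ℝ => T * √((K * (x ^ 3 + 1) + 1) / x ^ 4)) atTop (nhds 0) := by
    have : Tendsto (fun x : ℝ => (K * (x ^ 3 + 1) + 1) / x ^ 4) atTop (nhds 0) := by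
      have := ((tendsto_inv_pow 1 (by norm_num)).const_mul K).add
        ((tendsto_inv_pow 4 (by norm_num)).const_mul (K + 1))
      simp only [mul_zero, add_zero] at this
      refine this.congr' ?_
      filter_upwards [eventually_gt_atTop 0] with x hx
      field_simp
      ring
    have := ((Real.continuous_sqrt.tendsto 0).comp this).const_mul T
    simpa using this
  have h2 : Tendsto (fun x : ℝ => T * A / x ^ 2) atTop (nhds 0) := by
    have := (tendsto_inv_pow 2 (by norm_num)).const_mul (T * A)
    simpa [div_eq_mul_inv] using this
  have h3 : Tendsto (fun x : ℝ => B * Real.exp (H * x ^ 2 - x ^ 3)) atTop (nhds 0) := by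
    have : Tendsto (fun x : ℝ => H * x ^ 2 - x ^ 3) atTop atBot := by
      refine tendsto_atBot_mono' atTop ?_ tendsto_neg_atTop_atBot
      filter_upwards [eventually_ge_atTop (H + 1), eventually_ge_atTop 1] with x hx hx1
      nlinarith [mul_nonneg (sq_nonneg x) (sub_nonneg.2 hx)]
    simpa using (Real.tendsto_exp_atBot.comp this).const_mul B
  have h4 : Tendsto (fun x : ℝ => D * Real.exp (H * x ^ 2 + x ^ 4 - x ^ 6 / 4)) atTop (nhds 0) := by
    have : Tendsto (fun x : ℝ => H * x ^ 2 + x ^ 4 - x ^ 6 / 4) atTop atBot := by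
      refine tendsto_atBot_mono' atTop ?_ tendsto_neg_atTop_atBot
      filter_upwards [eventually_ge_atTop (H + 1), eventually_ge_atTop 4] with x hx hx1
      have a1 : H * x ^ 2 ≤ x ^ 4 := by
        have : H * x ^ 2 ≤ x ^ 2 * x ^ 2 := by
          gcongr; nlinarith
        nlinarith
      have a2 : 4 * x ^ 4 ≤ x ^ 6 / 4 := by
        have : 16 * x ^ 4 ≤ x ^ 2 * x ^ 4 := by gcongr; nlinarith
        nlinarith
      have a3 : x ≤ x ^ 4 := le_self_pow₀ (by linarith) (by norm_num)
      change _ ≤ -x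
      linarith [pow_nonneg (show (0:ℝ) ≤ x by linarith) 4]
    simpa using (Real.tendsto_exp_atBot.comp this).const_mul D
  simpa using ((h1.add h2).add h3).add h4


lemma char_lim (θ : ℝ) (hθ : 0 < θ) (u : ℕ → ℝ) (hu : ∀ j, |u j| ≤ 1) (c₂ : ℝ) (hc : 0 < c₂)
    (hc₂ : Tendsto (fun N : ℕ => (1 / (N : ℝ)) * ∑ j ∈ Finset.Icc 1 N, u j ^ 2) atTop (nhds c₂))
    (t : ℝ) :
    Tendsto (fun N : ℕ => EE θ N (fun s => Complex.exp (Complex.I *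
      ((-(t / √(θ * c₂ * Real.log N)) * ∑ j ∈ Finset.Icc 1 N, u j *
          ((s.count j : ℝ) - EE θ N (fun s => (s.count j : ℝ))) : ℝ) : ℂ))))
      atTop (nhds (Complex.exp ((-(t ^ 2 / 2) : ℝ) : ℂ))) := by
  set x : ℕ → ℝ := fun N => √√(Real.log N) with hxdef
  set M : ℕ → ℕ := fun N => ⌊Real.exp (x N ^ 4 - x N ^ 3)⌋₊ with hMdef
  set s : ℕ → ℝ := fun N => -(t / √(θ * c₂ * Real.log N)) with hsdef
  set T : ℝ := |t| / √(θ * c₂) with hTdef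
  have hT : 0 ≤ T := by positivity
  have hlog : Tendsto (fun n : ℕ => Real.log n) atTop atTop :=
    Real.tendsto_log_atTop.comp tendsto_natCast_atTop_atTop
  have hx : Tendsto x atTop atTop :=
    Real.tendsto_sqrt_atTop.comp (Real.tendsto_sqrt_atTop.comp hlog)
  have hx2 : ∀ N, x N ^ 2 = √(Real.log N) := fun N => Real.sq_sqrt (Real.sqrt_nonneg _)
  have hx4 : ∀ N, x N ^ 4 = Real.log N := fun N => by
    rw [show x N ^ 4 = (x N ^ 2) ^ 2 by ring, hx2, Real.sq_sqrt (Real.log_natCast_nonneg N)]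
  have hN : ∀ N : ℕ, 1 ≤ N → (N : ℝ) = Real.exp (x N ^ 4) := fun N h => by
    rw [hx4, Real.exp_log (by exact_mod_cast h)]
  have hsabs : ∀ N, |s N| = T / x N ^ 2 := fun N => by
    simp only [hsdef, hTdef]
    rw [abs_neg, abs_div, abs_of_nonneg (Real.sqrt_nonneg _), Real.sqrt_mul (by positivity), hx2,
      div_div]
  have hev : ∀ᶠ N : ℕ in atTop, 2 ≤ x N ∧ 1 ≤ N :=
    (hx.eventually_ge_atTop 2).and (eventually_ge_atTop 1)
  have hpar : ∀ᶠ N : ℕ in atTop, 2 ≤ x N ∧ 1 ≤ N ∧ Real.log (M N) ≤ x N ^ 4 ∧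
      x N ^ 4 - x N ^ 3 - 1 ≤ Real.log (M N) := by
    filter_upwards [hev] with N h
    obtain ⟨_, _, _, _, h5, h6, _⟩ := params (x N) h.1 N (hN N h.2) (M N) rfl
    exact ⟨h.1, h.2, h5, h6⟩
  -- the error
  have hd : Tendsto (fun N : ℕ => EE θ N (fun t => Complex.exp (Complex.I * ((s N * ∑ j ∈ Finset.Icc 1 N,
        u j * ((t.count j : ℝ) - EE θ N (fun s => (s.count j : ℝ))) : ℝ) : ℂ))) -
      Complex.exp (∑ j ∈ Finset.Icc 1 (M N),
        (θ : ℂ) * (Complex.exp (Complex.I * ((s N * u j : ℝ) : ℂ)) - 1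
          - Complex.I * ((s N * u j : ℝ) : ℂ)) / j)) atTop (nhds 0) := by
    have hb := (bound_lim (24 * |θ - 1| * θ ^ 2 + 2 * θ) T (8 + 4 * |θ - 1| * θ) (4 * |θ - 1|)
      (2 + 1 / θ) (2 * θ * T * Real.exp 1)).comp hx
    refine squeeze_zero_norm' ?_ hb
    filter_upwards [hev] with N h
    obtain ⟨h1, h2, _⟩ := params (x N) h.1 N (hN N h.2) (M N) rfl
    refine (char_est θ hθ N (M N) h1 h2 (s N) u hu).trans ?_
    rw [hsabs]
    exact err_bound θ hθ T hT (x N) h.1 N (hN N h.2) (M N) rfl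
  have hxk : ∀ k : ℕ, k ≠ 0 → Tendsto (fun N => 1 / x N ^ k) atTop (nhds 0) := fun k hk =>
    (tendsto_inv_pow k hk).comp hx
  have hs0 : Tendsto s atTop (nhds 0) := by
    rw [tendsto_zero_iff_abs_tendsto_zero]
    have := (hxk 2 (by norm_num)).const_mul T
    rw [mul_zero] at this
    refine this.congr fun N => ?_
    simp only [Function.comp, hsabs]; ring
  have hratio : Tendsto (fun N => Real.log (M N) / x N ^ 4) atTop (nhds 1) := by
    have hl : Tendsto (fun N => 1 - 1 / x N ^ 1 - 1 / x N ^ 4) atTop (nhds 1) := by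
      simpa using ((hxk 1 (by norm_num)).const_sub 1).sub (hxk 4 (by norm_num))
    refine tendsto_of_tendsto_of_tendsto_of_le_of_le' hl tendsto_const_nhds ?_ ?_
    · filter_upwards [hpar] with N h
      have h0 : 0 < x N := by linarith [h.1]
      rw [le_div_iff₀ (by positivity)]
      refine le_trans (le_of_eq ?_) h.2.2.2
      field_simp
    · filter_upwards [hpar] with N h
      have h0 : 0 < x N := by linarith [h.1]
      rw [div_le_one (by positivity)]
      exact h.2.2.1
  have hlogM : Tendsto (fun N => Real.log (M N)) atTop atTop := by
    refine tendsto_atTop_mono' atTop ?_ (tendsto_atTop_add_const_right atTop (-1) hx)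
    filter_upwards [hpar] with N h
    refine le_trans ?_ h.2.2.2
    have h0 := h.1
    have : x N ≤ x N ^ 3 := le_self_pow₀ (by linarith) (by norm_num)
    have h3 : x N ^ 3 * 2 ≤ x N ^ 3 * x N := by gcongr
    nlinarith
  have hM : Tendsto M atTop atTop := by
    have : Tendsto (fun N => (M N : ℝ)) atTop atTop := by
      refine tendsto_atTop_mono (fun N => ?_) hlogM
      exact Real.log_le_self (Nat.cast_nonneg _)
    exact tendsto_natCast_atTop_iff.1 this
  have hq : Tendsto (fun N => s N ^ 2 * ∑ j ∈ Finset.Icc 1 (M N), u j ^ 2 / j) atTop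
      (nhds (t ^ 2 / θ)) := by
    have h1 := (log_mean (fun j => u j ^ 2) c₂ hc₂).comp hM
    have h2 := (h1.mul hratio).const_mul (T ^ 2)
    have e : T ^ 2 * (c₂ * 1) = t ^ 2 / θ := by
      simp only [hTdef]
      rw [div_pow, sq_abs, Real.sq_sqrt (by positivity)]
      field_simp
    rw [e] at h2
    refine h2.congr' ?_
    filter_upwards [hpar, hlogM.eventually_gt_atTop 0] with N h hl
    have h0 : 0 < x N := by linarith [h.1]
    rw [← sq_abs (s N), hsabs]
    simp only [Function.comp]
    field_simp
  have h3 : Tendsto (fun N => |s N| ^ 3 * (1 + Real.log (M N))) atTop (nhds 0) := by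
    have h1 := ((hxk 6 (by norm_num)).add (hxk 2 (by norm_num))).const_mul (T ^ 3)
    simp only [add_zero, mul_zero] at h1
    refine tendsto_of_tendsto_of_tendsto_of_le_of_le' tendsto_const_nhds h1 ?_ ?_
    · filter_upwards [hlogM.eventually_gt_atTop 0] with N h
      positivity
    · filter_upwards [hpar] with N h
      have h0 : 0 < x N := by linarith [h.1]
      rw [hsabs]
      calc _ ≤ (T / x N ^ 2) ^ 3 * (1 + x N ^ 4) := by gcongr; exact h.2.2.1
        _ = _ := by field_simp
  have hexp := exponent_lim θ hθ u hu s M _ hs0 hq h3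
  have hq' : θ * (t ^ 2 / θ) / 2 = t ^ 2 / 2 := by field_simp
  rw [hq'] at hexp
  have := hd.add ((Complex.continuous_exp.tendsto _).comp hexp)
  rw [zero_add] at this
  refine this.congr fun N => ?_
  simp only [Function.comp]
  ring

/-- Central limit theorem for the number of eigenvalues of an Ewens(θ) random
permutation matrix in a fixed arc: with `c₂ = lim (1/N) ∑_{j=1}^N ({jβ} − {jα})²`,
we have `c₂ > 0` and the normalized counting function
`(X_N^I − E(X_N^I))/√(θ c₂ log N)` converges in distribution (i.e. against every
bounded continuous test function) to the standard Gaussian `N(0,1)`. -/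
theorem stmt_19 (θ : ℝ) (hθ : 0 < θ) (α β : ℝ)
    (hα0 : 0 ≤ α) (hα1 : α < 1) (hαβ : α < β) (hβ : β < α + 1) (c₂ : ℝ)
    (hc₂ : Tendsto
      (fun N : ℕ =>
        (1 / (N : ℝ)) *
          ∑ j ∈ Finset.Icc 1 N,
            (Int.fract ((j : ℝ) * β) - Int.fract ((j : ℝ) * α)) ^ 2)
      atTop (nhds c₂)) :
    0 < c₂ ∧
    ∀ f : ℝ → ℝ, Continuous f → (∃ C : ℝ, ∀ x : ℝ, |f x| ≤ C) →
      Tendsto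
        (fun N : ℕ =>
          ∑ σ : Equiv.Perm (Fin N),
            ewens θ N σ *
              f ((XNI N α β σ - ewensMean θ N α β) / Real.sqrt (θ * c₂ * Real.log N)))
        atTop
        (nhds (∫ x, f x ∂(ProbabilityTheory.gaussianReal 0 1))) := by
  have hc := c2_pos α β hαβ hβ c₂ hc₂
  refine ⟨hc, fun f hf hb => ?_⟩
  refine conclude θ hθ (fun N σ => (XNI N α β σ - ewensMean θ N α β) /
    Real.sqrt (θ * c₂ * Real.log N)) (fun t => ?_) f hf hb
  have hu : ∀ j : ℕ, |Int.fract ((j : ℝ) * β) - Int.fract ((j : ℝ) * α)| ≤ 1 := fun j => by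
    have h1 := Int.fract_nonneg ((j : ℝ) * β)
    have h2 := Int.fract_lt_one ((j : ℝ) * β)
    have h3 := Int.fract_nonneg ((j : ℝ) * α)
    have h4 := Int.fract_lt_one ((j : ℝ) * α)
    rw [abs_le]; constructor <;> linarith
  refine (char_lim θ hθ (fun j => Int.fract ((j : ℝ) * β) - Int.fract ((j : ℝ) * α)) hu c₂ hc hc₂
    t).congr fun N => ?_
  rw [← charsum_eq θ hθ]
  refine Finset.sum_congr rfl fun σ _ => ?_
  congr 4
  ring
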